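/- Let Δ⃗_n = (Δ_{n,1},…,Δ_{n,d}) be collections of pairwise disjoint closed intervals converging componentwise to pairwise disjoint closed intervals Δ⃗ = (Δ_1,…,Δ_d). For each i, let b_{n,i} be continuous functions defined on some interval containing ∪_m Δ_{m,i} that converge uniformly on this interval to a continuous function b_i. Let y⃗_n and y⃗ be the unique solutions of y⃗_n = ℋ_{Δ⃗_n} y⃗_n + b⃗_n and y⃗ = ℋ_{Δ⃗} y⃗ + b⃗, where (b⃗_n)_i = b_{n,i}|_{Δ_{n,i}} and (b⃗)_i = b_i|_{Δ_i}. Then for each i, the harmonic extensions satisfy H_{Δ_{n,i}}(y⃗_n)_i(z) → H_{Δ_i}(y⃗)_i(z) as n→∞, uniformly for z in the extended complex plane. -/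

import Mathlib

open MeasureTheory Set Filter Topology Polynomial

noncomputable section

/-- The arcsine distribution `dω_[a,b](x) = dx/(π √((x−a)(b−x)))` on `[a,b]`. -/
def arcsineMeasure (a b : ℝ) : Measure ℝ :=
  (volume.restrict (Set.Icc a b)).withDensity
    fun x => ENNReal.ofReal (1 / (Real.pi * Real.sqrt ((x - a) * (b - x))))

/-- The branch of `√((z−a)(z−b))` holomorphic off `[a,b]` with `w(z) = z + O(1)` at `∞`. -/
def wBranch (a b : ℝ) (z : ℂ) : ℂ :=
  (z - a) * Complex.exp ((1 / 2 : ℂ) * Complex.log ((z - b) / (z - a)))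

/-- Cauchy transform `∫ u(x)/(z−x) dω_[a,b](x)`. -/
def cauchyT (a b : ℝ) (u : ℝ → ℝ) (z : ℂ) : ℂ :=
  ∫ x, (u x : ℂ) / (z - (x : ℂ)) ∂(arcsineMeasure a b)

/-- `H_Δ u`, the harmonic extension of `u` off `Δ = [a,b]`. -/
def harmExt (a b : ℝ) (u : ℝ → ℝ) (z : ℂ) : ℝ :=
  (wBranch a b z * cauchyT a b u z).re

/-- The outer function `Ω_Δ(f,z) := exp( w_Δ(z) ∫ log f(x)/(z−x) dω_Δ(x) )`. -/
def OmegaFun (a b : ℝ) (f : ℝ → ℝ) (z : ℂ) : ℂ :=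
  Complex.exp (wBranch a b z * cauchyT a b (fun x => Real.log (f x)) z)

/-- The value of `Ω_Δ(f,·)` at infinity: `exp( ∫ log f dω_Δ )`. -/
def OmegaInf (a b : ℝ) (f : ℝ → ℝ) : ℝ :=
  Real.exp (∫ x, Real.log (f x) ∂(arcsineMeasure a b))

/-- Radon–Nikodym derivative `μ′` of `μ` with respect to Lebesgue measure. -/
def lebDeriv (μ : Measure ℝ) (x : ℝ) : ℝ := (μ.rnDeriv volume x).toReal

/-- `v_Δ(x) = π μ′(x) √((x−a)(b−x))`, the density of `μ|_Δ` w.r.t. the arcsine law. -/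
def vDens (μ : Measure ℝ) (a b : ℝ) (x : ℝ) : ℝ :=
  Real.pi * lebDeriv μ x * Real.sqrt ((x - a) * (b - x))

/-- Szegő function `G(e^h μ|_[a,b], z)`. -/
def szegoG (μ : Measure ℝ) (a b : ℝ) (h : ℝ → ℝ) (z : ℂ) : ℂ :=
  OmegaFun a b (fun x => Real.sqrt (Real.exp (h x) * vDens μ a b x)) z

/-- Szegő function `G(e^h μ|_[a,b], ·)` at infinity. -/
def szegoGInf (μ : Measure ℝ) (a b : ℝ) (h : ℝ → ℝ) : ℝ :=
  OmegaInf a b fun x => Real.sqrt (Real.exp (h x) * vDens μ a b x)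

/-- Support of a measure on `ℝ`. -/
def msupp (μ : Measure ℝ) : Set ℝ := {x | ∀ ε > 0, 0 < μ (Metric.ball x ε)}

def suppInf (μ : Measure ℝ) : ℝ := sInf (msupp μ)
def suppSup (μ : Measure ℝ) : ℝ := sSup (msupp μ)

/-- `Δ(μ)`, the convex hull of the support of `μ`. -/
def convHullSupp (μ : Measure ℝ) : Set ℝ := Set.Icc (suppInf μ) (suppSup μ)

/-- Logarithmic potential `V^ω(x) = −∫ log|x−t| dω(t)`. -/
def logPot (ω : Measure ℝ) (x : ℝ) : ℝ := -∫ t, Real.log |x - t| ∂ω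

/-- The Szegő condition `μ ∈ Sz([a,b])`. -/
def SzCond (μ : Measure ℝ) (a b : ℝ) : Prop :=
  Integrable (fun x => Real.log (lebDeriv μ x)) (arcsineMeasure a b)

/-- The increasing affine map of `[a,b]` onto `[c,d]`. -/
def affIcc (a b c d : ℝ) (x : ℝ) : ℝ := c + ((d - c) / (b - a)) * (x - a)

/-- The uniform Szegő condition `μ ∈ USz([a,b])`. -/
def USzCond (μ : Measure ℝ) (a b : ℝ) : Prop :=
  SzCond μ a b ∧
  ∀ A B : ℕ → ℝ, (∀ n, A n < B n) → (∀ n, Set.Icc (A n) (B n) ⊆ convHullSupp μ) →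
    Tendsto A atTop (𝓝 a) → Tendsto B atTop (𝓝 b) →
    (∀ᶠ n in atTop, SzCond μ (A n) (B n)) ∧
    Tendsto (fun n => ∫ x,
        |Real.log (lebDeriv μ x) - Real.log (lebDeriv μ (affIcc a b (A n) (B n) x))|
          ∂(arcsineMeasure a b)) atTop (𝓝 0)

/-- `P` is the `n`-th monic orthogonal polynomial with respect to `ν`. -/
def IsMonicOP (ν : Measure ℝ) (n : ℕ) (P : Polynomial ℝ) : Prop :=
  P.Monic ∧ P.natDegree = n ∧ ∀ k < n, ∫ x, x ^ k * P.eval x ∂ν = 0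

/-- The weighted measure `e^θ μ`. -/
def expWt (μ : Measure ℝ) (θ : ℝ → ℝ) : Measure ℝ :=
  μ.withDensity fun x => ENNReal.ofReal (Real.exp (θ x))

/-- An Angelesco system of `d` measures, with `Δ(μ_i) = [lo i, hi i]`. -/
structure Angelesco (d : ℕ) (μ : Fin d → Measure ℝ) (lo hi : Fin d → ℝ) : Prop where
  two_le : 2 ≤ d
  bounded : ∀ i, Bornology.IsBounded (msupp (μ i))
  infinite : ∀ i, (msupp (μ i)).Infinite
  lo_eq : ∀ i, lo i = suppInf (μ i)
  hi_eq : ∀ i, hi i = suppSup (μ i)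
  sep : ∀ i j, i < j → hi i < lo j

/-- The vector equilibrium measure `(ω_1,…,ω_d)` with parameter `c`,
with `supp ω_i = [A i, B i] ⊆ [lo i, hi i]` and masses `c i`. -/
structure VecEquil (d : ℕ) (lo hi : Fin d → ℝ) (c : Fin d → ℝ)
    (ω : Fin d → Measure ℝ) (A B : Fin d → ℝ) : Prop where
  endpoints : ∀ i, lo i ≤ A i ∧ A i < B i ∧ B i ≤ hi i
  supp : ∀ i, msupp (ω i) = Set.Icc (A i) (B i)
  mass : ∀ i, ω i Set.univ = ENNReal.ofReal (c i)
  equil : ∀ j, ∃ ℓ : ℝ,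
    (∀ x ∈ Set.Icc (A j) (B j), logPot (ω j) x + ∑ i, logPot (ω i) x = ℓ) ∧
    (∀ x ∈ Set.Icc (lo j) (hi j) \ Set.Icc (A j) (B j),
        ℓ < logPot (ω j) x + ∑ i, logPot (ω i) x)

/-- The vector `(S_1,…,S_d)` of conjugate-symmetric outer functions in `H²(D_{Δ_i})`,
positive at infinity, with boundary moduli `g_i` satisfying
`|S_{i±}|² ∏_{j≠i} S_j = v_i` a.e. on `Δ_i` (outer functions positive at infinity are
recovered from their boundary moduli by `S_i = Ω_{Δ_i}(g_i, ·)`). -/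
def IsSzegoVector (d : ℕ) (A B : Fin d → ℝ) (v : Fin d → ℝ → ℝ)
    (g : Fin d → ℝ → ℝ) (S : Fin d → ℂ → ℂ) : Prop :=
  (∀ i x, 0 ≤ g i x) ∧
  (∀ i, Integrable (fun x => Real.log (g i x)) (arcsineMeasure (A i) (B i))) ∧
  (∀ i, S i = fun z => OmegaFun (A i) (B i) (g i) z) ∧
  (∀ i, ∀ᵐ x ∂(arcsineMeasure (A i) (B i)),
    (g i x) ^ 2 * ∏ j ∈ Finset.univ.erase i, (S j (x : ℂ)).re = v i x)

/-- The operator `ℋ` with component `i` equal to `−(1/2) Σ_{j≠i} H_{[A j, B j]} u_j`. -/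
def calH (d : ℕ) (A B : Fin d → ℝ) (u : Fin d → ℝ → ℝ) (i : Fin d) (x : ℝ) : ℝ :=
  -(1 / 2) * ∑ j ∈ Finset.univ.erase i, harmExt (A j) (B j) (u j) (x : ℂ)

/-- sup norm over `[a,b]`. -/
def supIcc (a b : ℝ) (f : ℝ → ℝ) : ℝ := sSup ((fun x => |f x|) '' Set.Icc a b)

/-- Norm of `C(Δ⃗)`. -/
def vecCNorm (d : ℕ) (A B : Fin d → ℝ) (u : Fin d → ℝ → ℝ) : ℝ :=
  ∑ i, supIcc (A i) (B i) (u i)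

/-- Norm of `C¹(Δ⃗)`. -/
def vecC1Norm (d : ℕ) (A B : Fin d → ℝ) (u : Fin d → ℝ → ℝ) : ℝ :=
  ∑ i, (supIcc (A i) (B i) (u i) +
    supIcc (A i) (B i) (derivWithin (u i) (Set.Icc (A i) (B i))))

/-- membership in `C(Δ⃗)`. -/
def memVecC (d : ℕ) (A B : Fin d → ℝ) (u : Fin d → ℝ → ℝ) : Prop :=
  ∀ i, ContinuousOn (u i) (Set.Icc (A i) (B i))

/-- membership in `C¹(Δ⃗)`. -/
def memVecC1 (d : ℕ) (A B : Fin d → ℝ) (u : Fin d → ℝ → ℝ) : Prop :=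
  ∀ i, ContDiffOn ℝ 1 (u i) (Set.Icc (A i) (B i))

/-- `|w_Δ(x)|` for real `x`. -/
def wAbs (p q x : ℝ) : ℝ := Real.sqrt |(x - p) * (x - q)|

/-- Riemann–Liouville type fractional integral of order 1/2. -/
def fracInt (γ : ℝ) (θ : ℝ → ℝ) (x : ℝ) : ℝ :=
  (Real.sqrt Real.pi)⁻¹ * ∫ t in γ..x, θ t / Real.sqrt |x - t|

/-
The affine change of variable from `[-1, 1]` to each interval turns `ℋ_{Δ⃗}` into an operator on
`C([-1, 1], ℝ^d)`. Its kernel is continuous, because the intervals are disjoint, so the operator is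
compact and depends norm-continuously on the endpoints. If `u = ℋ u`, then the harmonic extensions
satisfy `2 u_i = -∑_{j ≠ i} H_j u_j` on the `i`-th interval, and the maximum principle off the
intervals forces `u = 0`. By the Fredholm alternative `1 - ℋ` is invertible, so continuity of
inversion gives convergence of the transported solutions. Harmonic extension does not increase the
sup norm, and it is continuous up to the slit, which turns this into uniform convergence on the
extended plane.
-/

section AffineMaps

variable {a b c d : ℝ}

theorem affIcc_affIcc (hab : a ≠ b) (hcd : c ≠ d) (x : ℝ) :
    affIcc c d a b (affIcc a b c d x) = x := by
  have hba : b - a ≠ 0 := sub_ne_zero.2 hab.symm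
  have hdc : d - c ≠ 0 := sub_ne_zero.2 hcd.symm
  simp only [affIcc]
  field_simp
  ring

theorem mapsTo_affIcc (hab : a < b) (hcd : c ≤ d) :
    MapsTo (affIcc a b c d) (Icc a b) (Icc c d) := by
  intro x hx
  have hba : 0 < b - a := sub_pos.2 hab
  have hslope : 0 ≤ (d - c) / (b - a) := div_nonneg (sub_nonneg.2 hcd) hba.le
  refine ⟨le_add_of_nonneg_right (mul_nonneg hslope (sub_nonneg.2 hx.1)), ?_⟩
  calc c + (d - c) / (b - a) * (x - a) ≤ c + (d - c) / (b - a) * (b - a) := by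
        gcongr
        exact hx.2
    _ = d := by rw [div_mul_cancel₀ _ hba.ne', add_sub_cancel]

theorem bijOn_affIcc (hab : a < b) (hcd : c < d) :
    BijOn (affIcc a b c d) (Icc a b) (Icc c d) :=
  BijOn.mk (mapsTo_affIcc hab hcd.le)
    (LeftInvOn.injOn (f₁' := affIcc c d a b) fun x _ => affIcc_affIcc hab.ne hcd.ne x)
    fun x hx =>
      ⟨affIcc c d a b x, mapsTo_affIcc hcd hab.le hx, affIcc_affIcc hcd.ne hab.ne x⟩

theorem hasDerivAt_affIcc (x : ℝ) : HasDerivAt (affIcc a b c d) ((d - c) / (b - a)) x := by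
  refine ((((hasDerivAt_id' x).sub_const a).const_mul ((d - c) / (b - a))).const_add c).congr_deriv
    ?_
  rw [mul_one]

theorem continuous_affIcc : Continuous (affIcc a b c d) := by
  unfold affIcc
  fun_prop

end AffineMaps

section ArcsineLaw

variable {E : Type*} [NormedAddCommGroup E] [NormedSpace ℝ E] {a b : ℝ}

theorem integral_arcsineMeasure (f : ℝ → E) :
    ∫ x, f x ∂(arcsineMeasure a b) =
      ∫ x in Icc a b, (1 / (Real.pi * Real.sqrt ((x - a) * (b - x)))) • f x := by
  rw [arcsineMeasure, integral_withDensity_eq_integral_toReal_smul (by fun_prop)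
    (ae_of_all _ fun _ => ENNReal.ofReal_lt_top)]
  simp only [ENNReal.toReal_ofReal (show (0 : ℝ) ≤ 1 / (Real.pi * Real.sqrt _) by positivity)]

theorem integral_arcsineMeasure_eq_integral_cos (hab : a < b) (f : ℝ → E) :
    ∫ x, f x ∂(arcsineMeasure a b) =
      Real.pi⁻¹ • ∫ θ in (0 : ℝ)..Real.pi, f (affIcc (-1) 1 a b (Real.cos θ)) := by
  have hba : 0 < (b - a) / (1 - -1) := by linarith
  have hbij : BijOn (fun θ => affIcc (-1) 1 a b (Real.cos θ)) (Icc 0 Real.pi) (Icc a b) :=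
    (bijOn_affIcc (by norm_num) hab).comp Real.bijOn_cos
  have hderiv : ∀ θ ∈ Icc 0 Real.pi, HasDerivWithinAt
      (fun θ => affIcc (-1) 1 a b (Real.cos θ))
      ((b - a) / (1 - -1) * -Real.sin θ) (Icc 0 Real.pi) θ := fun θ _ =>
    ((hasDerivAt_affIcc (Real.cos θ)).comp θ (Real.hasDerivAt_cos θ)).hasDerivWithinAt
  rw [integral_arcsineMeasure, ← hbij.image_eq,
    integral_image_eq_integral_abs_deriv_smul measurableSet_Icc hderiv hbij.injOn,
    intervalIntegral.integral_of_le Real.pi_pos.le, ← integral_smul,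
    integral_Icc_eq_integral_Ioo, integral_Ioc_eq_integral_Ioo]
  refine setIntegral_congr_fun measurableSet_Ioo fun θ hθ => ?_
  have hsin : 0 < Real.sin θ := Real.sin_pos_of_mem_Ioo hθ
  have hprod : (affIcc (-1) 1 a b (Real.cos θ) - a) * (b - affIcc (-1) 1 a b (Real.cos θ)) =
      ((b - a) / (1 - -1) * Real.sin θ) ^ 2 := by
    rw [mul_pow, Real.sin_sq]
    unfold affIcc
    ring
  simp only [hprod, mul_neg, abs_neg, smul_smul]
  rw [Real.sqrt_sq (by positivity), abs_of_pos (by positivity)]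
  have hba' : b - a ≠ 0 := (sub_pos.2 hab).ne'
  congr 1
  field_simp

/-- The arcsine distribution of `[-1, 1]`, as a law on the compact space `[-1, 1]`. -/
def arcsineLaw : Measure (Icc (-1 : ℝ) 1) := (arcsineMeasure (-1) 1).comap Subtype.val

theorem integral_arcsineLaw (f : ℝ → E) :
    ∫ s : Icc (-1 : ℝ) 1, f s ∂arcsineLaw =
      Real.pi⁻¹ • ∫ θ in (0 : ℝ)..Real.pi, f (Real.cos θ) := by
  have hid : affIcc (-1) 1 (-1) 1 = id := by
    funext x
    simp only [affIcc, id]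
    ring
  rw [arcsineLaw, integral_subtype_comap measurableSet_Icc, arcsineMeasure,
    restrict_withDensity measurableSet_Icc, Measure.restrict_restrict measurableSet_Icc,
    inter_self, ← arcsineMeasure, integral_arcsineMeasure_eq_integral_cos (by norm_num), hid]
  rfl

theorem integral_arcsineMeasure_eq_integral_arcsineLaw (hab : a < b) (f : ℝ → E) :
    ∫ x, f x ∂(arcsineMeasure a b) =
      ∫ s : Icc (-1 : ℝ) 1, f (affIcc (-1) 1 a b s) ∂arcsineLaw := by
  rw [integral_arcsineMeasure_eq_integral_cos hab,
    integral_arcsineLaw fun s => f (affIcc (-1) 1 a b s)]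

instance : IsProbabilityMeasure arcsineLaw := by
  have hone : ∫ _ : Icc (-1 : ℝ) 1, (1 : ℝ) ∂arcsineLaw = 1 := by
    rw [integral_arcsineLaw fun _ => (1 : ℝ)]
    simp [Real.pi_ne_zero]
  rw [integral_const, smul_eq_mul, mul_one, Measure.real, ENNReal.toReal_eq_one_iff] at hone
  exact ⟨hone⟩

end ArcsineLaw

section ArcsineCircle

variable {E : Type*} [NormedAddCommGroup E] [NormedSpace ℝ E]

theorem integral_arcsineLaw_eq_circleAverage {f : ℝ → E} (hf : ContinuousOn f (Icc (-1) 1)) :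
    ∫ s : Icc (-1 : ℝ) 1, f s ∂arcsineLaw = Real.circleAverage (fun ζ => f ζ.re) 0 1 := by
  have hcont : Continuous fun θ => f (Real.cos θ) :=
    hf.comp_continuous Real.continuous_cos Real.cos_mem_Icc
  have hreflect : ∫ θ in Real.pi..2 * Real.pi, f (Real.cos θ) =
      ∫ θ in (0 : ℝ)..Real.pi, f (Real.cos θ) := by
    have hsubst := intervalIntegral.integral_comp_sub_left (a := 0) (b := Real.pi)
      (fun θ => f (Real.cos θ)) (2 * Real.pi)
    rw [sub_zero, show 2 * Real.pi - Real.pi = Real.pi by ring] at hsubst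
    simpa only [Real.cos_two_pi_sub] using hsubst.symm
  rw [integral_arcsineLaw, Real.circleAverage_def]
  simp only [circleMap_zero, Complex.ofReal_one, one_mul, Complex.exp_ofReal_mul_I_re]
  rw [← intervalIntegral.integral_add_adjacent_intervals (hcont.intervalIntegrable 0 Real.pi)
    (hcont.intervalIntegrable Real.pi (2 * Real.pi)), hreflect, ← two_smul ℝ, smul_smul,
    mul_inv_rev, inv_mul_cancel_right₀ two_ne_zero]

end ArcsineCircle

section Joukowski

/-- The Joukowski map, which sends the punctured unit disc conformally onto `ℂ ∖ [-1, 1]` and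
folds the unit circle onto `[-1, 1]`. -/
def joukowski (ζ : ℂ) : ℂ := (ζ + ζ⁻¹) / 2

/-- The slit `[-1, 1]`, as a subset of the complex plane. -/
def slit : Set ℂ := Complex.ofReal '' Icc (-1) 1

theorem isCompact_slit : IsCompact slit := isCompact_Icc.image Complex.continuous_ofReal

theorem joukowski_of_norm_eq_one {ζ : ℂ} (hζ : ‖ζ‖ = 1) : joukowski ζ = ζ.re := by
  rw [joukowski, Complex.inv_eq_conj hζ, Complex.re_eq_add_conj]

theorem exists_joukowski_eq {z : ℂ} (hz : z ∉ slit) :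
    ∃ ζ : ℂ, ζ ≠ 0 ∧ ‖ζ‖ < 1 ∧ joukowski ζ = z := by
  obtain ⟨r, hr⟩ := IsAlgClosed.exists_pow_nat_eq (z ^ 2 - 1) two_pos
  have hprod : (z + r) * (z - r) = 1 := by linear_combination -hr
  have hinv : (z + r)⁻¹ = z - r := inv_eq_of_mul_eq_one_right hprod
  have hinv' : (z - r)⁻¹ = z + r := inv_eq_of_mul_eq_one_left hprod
  have hplus : joukowski (z + r) = z := by rw [joukowski, hinv]; ring
  have hminus : joukowski (z - r) = z := by rw [joukowski, hinv']; ring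
  rcases lt_trichotomy ‖z + r‖ 1 with hlt | heq | hgt
  · exact ⟨z + r, left_ne_zero_of_mul_eq_one hprod, hlt, hplus⟩
  · refine absurd ⟨(z + r).re, abs_le.1 (heq ▸ Complex.abs_re_le_norm (z + r)), ?_⟩ hz
    rw [← joukowski_of_norm_eq_one heq, hplus]
  · refine ⟨z - r, right_ne_zero_of_mul_eq_one hprod, ?_, hminus⟩
    rw [← hinv, norm_inv]
    exact inv_lt_one_of_one_lt₀ hgt

theorem re_one_add_div_one_sub_pos {ζ : ℂ} (hζ : ‖ζ‖ < 1) : 0 < ((1 + ζ) / (1 - ζ)).re := by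
  have hne : 1 - ζ ≠ 0 := sub_ne_zero.2 fun h => by simp [← h] at hζ
  have hre : poissonKernel 0 ζ 1 = ((1 + ζ) / (1 - ζ)).re := by
    rw [poissonKernel_eq_re_herglotzRieszKernel, Function.comp_apply, herglotzRieszKernel_def,
      sub_zero, sub_zero]
  rw [← hre, poissonKernel_def]
  simp only [sub_zero, norm_one, one_pow]
  exact div_pos (sub_pos.2 (pow_lt_one₀ (norm_nonneg ζ) hζ two_ne_zero))
    (pow_pos (norm_pos_iff.2 hne) 2)

end Joukowski

section Branch

theorem wBranch_sq {a b : ℝ} {z : ℂ} (hz : z ≠ b) : wBranch a b z ^ 2 = (z - a) * (z - b) := by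
  rcases eq_or_ne z a with rfl | hza
  · simp [wBranch]
  have ha : z - a ≠ 0 := sub_ne_zero.2 hza
  rw [wBranch, mul_pow, ← Complex.exp_nat_mul, Nat.cast_two, ← mul_assoc, mul_one_div_cancel
    two_ne_zero, one_mul, Complex.exp_log (div_ne_zero (sub_ne_zero.2 hz) ha)]
  field_simp

theorem wBranch_joukowski {ζ : ℂ} (hζ : ζ ≠ 0) (hζ1 : ‖ζ‖ < 1) :
    wBranch (-1) 1 (joukowski ζ) = (ζ⁻¹ - ζ) / 2 := by
  have hre : 0 < ((1 - ζ) / (1 + ζ)).re := by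
    simpa only [norm_neg, sub_neg_eq_add, ← sub_eq_add_neg] using
      re_one_add_div_one_sub_pos (ζ := -ζ) (by rwa [norm_neg])
  have hadd : 1 + ζ ≠ 0 := fun h => by simp [h] at hre
  have hsub : 1 - ζ ≠ 0 := fun h => by simp [h] at hre
  have hquot : (joukowski ζ - (1 : ℝ)) / (joukowski ζ - (-1 : ℝ)) = ((1 - ζ) / (1 + ζ)) ^ 2 := by
    have hnum : joukowski ζ - (1 : ℝ) = (1 - ζ) ^ 2 / (2 * ζ) := by
      rw [joukowski]; push_cast; field_simp; ring
    have hden : joukowski ζ - (-1 : ℝ) = (1 + ζ) ^ 2 / (2 * ζ) := by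
      rw [joukowski]; push_cast; field_simp; ring
    rw [hnum, hden]
    field_simp
  have hsqrt : Complex.exp ((1 / 2 : ℂ) * Complex.log (((1 - ζ) / (1 + ζ)) ^ 2)) =
      (1 - ζ) / (1 + ζ) := by
    rw [mul_comm, one_div, ← Complex.cpow_def_of_ne_zero (pow_ne_zero 2 (div_ne_zero hsub hadd)),
      Complex.sq_cpow_two_inv hre]
  rw [wBranch, hquot, hsqrt, joukowski]
  push_cast
  field_simp
  ring

theorem norm_wBranch_sub_self_le {z : ℂ} (hz : z ∉ slit) : ‖wBranch (-1) 1 z - z‖ ≤ 1 := by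
  obtain ⟨ζ, hζ, hζ1, rfl⟩ := exists_joukowski_eq hz
  have hdiff : wBranch (-1) 1 (joukowski ζ) - joukowski ζ = -ζ := by
    rw [wBranch_joukowski hζ hζ1, joukowski]; ring
  rw [hdiff, norm_neg]
  exact hζ1.le

theorem div_mem_slitPlane {a b : ℝ} (hab : a ≤ b) {z : ℂ} (hz : z ∉ Complex.ofReal '' Icc a b) :
    (z - b) / (z - a) ∈ Complex.slitPlane := by
  rw [Complex.mem_slitPlane_iff_not_le_zero]
  intro hle
  obtain ⟨hre, him⟩ := Complex.nonpos_iff.1 hle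
  set t := ((z - b) / (z - a)).re
  have hquot : (z - b) / (z - a) = t := Complex.ext rfl him
  have hza : z - a ≠ 0 := sub_ne_zero.2 fun h => hz ⟨a, left_mem_Icc.2 hab, h.symm⟩
  have h1t : 0 < 1 - t := by linarith
  have h1t' : (1 : ℂ) - t ≠ 0 := by exact_mod_cast h1t.ne'
  refine hz ⟨(b - t * a) / (1 - t), ⟨?_, ?_⟩, ?_⟩
  · rw [le_div_iff₀ h1t]; linarith
  · rw [div_le_iff₀ h1t]; nlinarith
  · rw [div_eq_iff hza] at hquot
    push_cast
    rw [div_eq_iff h1t']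
    linear_combination -hquot

theorem differentiableOn_wBranch {a b : ℝ} (hab : a ≤ b) :
    DifferentiableOn ℂ (wBranch a b) (Complex.ofReal '' Icc a b)ᶜ := by
  intro z hz
  have hden : z - a ≠ 0 := sub_ne_zero.2 fun h => hz ⟨a, left_mem_Icc.2 hab, h.symm⟩
  have hquot := div_mem_slitPlane hab hz
  refine DifferentiableAt.differentiableWithinAt ?_
  unfold wBranch
  fun_prop (disch := assumption)

end Branch

section IntegralCLM

variable {X : Type*} [TopologicalSpace X] [CompactSpace X] [MeasurableSpace X]
  [OpensMeasurableSpace X] (μ : Measure X) [IsFiniteMeasure μ]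

theorem integrable_continuousMap {E : Type*} [NormedAddCommGroup E] (f : C(X, E)) :
    Integrable f μ :=
  f.continuous.integrable_of_hasCompactSupport (HasCompactSupport.of_compactSpace f)

variable (𝕜 : Type*) {E : Type*} [RCLike 𝕜] [NormedAddCommGroup E] [NormedSpace ℝ E]
  [NormedSpace 𝕜 E] [SMulCommClass ℝ 𝕜 E]

/-- Integration against a finite measure, as a continuous linear map on the space of continuous
functions on a compact space. -/
def integralContinuousMapCLM : C(X, E) →L[𝕜] E :=
  LinearMap.mkContinuous
    { toFun := fun f => ∫ x, f x ∂μ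
      map_add' := fun f g =>
        integral_add (integrable_continuousMap μ f) (integrable_continuousMap μ g)
      map_smul' := fun c f => integral_smul c f }
    (μ.real univ) fun f => by
      rw [mul_comm]
      exact norm_integral_le_of_norm_le_const (ae_of_all _ f.norm_coe_le_norm)

end IntegralCLM

section Kernel

/-- The inclusion of `[-1, 1]` in `ℂ`; its spectrum in the Banach algebra `C([-1, 1], ℂ)` is the
slit `[-1, 1]`. -/
def slitInclusion : C(Icc (-1 : ℝ) 1, ℂ) := ⟨fun s => ((s : ℝ) : ℂ), by fun_prop⟩

/-- The kernel `s ↦ w(z) / (z - s)` of the harmonic extension from `[-1, 1]`, written as a multiple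
of the resolvent of the inclusion `[-1, 1] → ℂ` so that it depends on `z` holomorphically in the
uniform norm. -/
def slitKernel (z : ℂ) : C(Icc (-1 : ℝ) 1, ℂ) := wBranch (-1) 1 z • resolvent slitInclusion z

theorem mem_resolventSet_slitInclusion {z : ℂ} (hz : z ∉ slit) :
    z ∈ resolventSet ℂ slitInclusion := by
  by_contra hmem
  have hrange : z ∈ spectrum ℂ slitInclusion := hmem
  rw [ContinuousMap.spectrum_eq_range] at hrange
  obtain ⟨s, rfl⟩ := hrange
  exact hz ⟨s, s.2, rfl⟩

theorem sub_ofReal_ne_zero {z : ℂ} (hz : z ∉ slit) (s : Icc (-1 : ℝ) 1) : z - (s : ℝ) ≠ 0 :=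
  sub_ne_zero.2 fun h => hz ⟨s, s.2, h.symm⟩

theorem slitKernel_apply {z : ℂ} (hz : z ∉ slit) (s : Icc (-1 : ℝ) 1) :
    slitKernel z s = wBranch (-1) 1 z / (z - (s : ℝ)) := by
  have hmul := congrArg (fun f : C(Icc (-1 : ℝ) 1, ℂ) => f s)
    (Ring.mul_inverse_cancel _ (mem_resolventSet_slitInclusion hz))
  have hinv : resolvent slitInclusion z s = (z - (s : ℝ))⁻¹ := eq_inv_of_mul_eq_one_right hmul
  rw [slitKernel, ContinuousMap.smul_apply, hinv, smul_eq_mul, div_eq_mul_inv]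

theorem differentiableOn_slitKernel : DifferentiableOn ℂ slitKernel slitᶜ := fun z hz =>
  (differentiableOn_wBranch (by norm_num) z hz).smul
    (spectrum.hasDerivAt_resolvent_const_left
      (mem_resolventSet_slitInclusion hz)).differentiableAt.differentiableWithinAt

theorem wBranch_div_joukowski_sub {ζ u : ℂ} (hζ : ζ ≠ 0) (hζ1 : ‖ζ‖ < 1) (hu : ‖u‖ = 1) :
    wBranch (-1) 1 (joukowski ζ) / (joukowski ζ - u.re) =
      (2⁻¹ : ℝ) • ((1 + ζ * u) / (1 - ζ * u) + (1 + ζ * u⁻¹) / (1 - ζ * u⁻¹)) := by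
  have hu0 : u ≠ 0 := norm_ne_zero_iff.1 (hu ▸ one_ne_zero)
  have hne : ∀ v : ℂ, ‖v‖ = 1 → 1 - ζ * v ≠ 0 := fun v hv => sub_ne_zero.2 fun h => by
    have hnorm := congrArg norm h
    rw [norm_one, norm_mul, hv, mul_one] at hnorm
    exact hζ1.ne' hnorm
  have hu1 := hne u hu
  have hu2 : u - ζ ≠ 0 := by
    have hprod := mul_ne_zero hu0 (hne u⁻¹ (by rw [norm_inv, hu, inv_one]))
    rwa [mul_sub, mul_one, mul_left_comm, mul_inv_cancel₀ hu0, mul_one] at hprod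
  have hden : joukowski ζ - u.re = (1 - ζ * u) * (u - ζ) / (2 * ζ * u) := by
    rw [← joukowski_of_norm_eq_one hu, joukowski, joukowski]
    field_simp
    ring
  rw [wBranch_joukowski hζ hζ1, hden, Complex.real_smul]
  push_cast
  field_simp
  ring

theorem re_slitKernel_nonneg {z : ℂ} (hz : z ∉ slit) (s : Icc (-1 : ℝ) 1) :
    0 ≤ (slitKernel z s).re := by
  obtain ⟨ζ, hζ, hζ1, rfl⟩ := exists_joukowski_eq hz
  set u := Complex.exp (Real.arccos s * Complex.I) with hu
  have hu1 : ‖u‖ = 1 := Complex.norm_exp_ofReal_mul_I _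
  have hs : (s : ℝ) = u.re := by
    rw [hu, Complex.exp_ofReal_mul_I_re, Real.cos_arccos s.2.1 s.2.2]
  have hpos : ∀ v : ℂ, ‖v‖ = 1 → 0 < ((1 + ζ * v) / (1 - ζ * v)).re := fun v hv =>
    re_one_add_div_one_sub_pos (by rwa [norm_mul, hv, mul_one])
  rw [slitKernel_apply hz, hs, wBranch_div_joukowski_sub hζ hζ1 hu1, Complex.smul_re,
    Complex.add_re]
  have := hpos u hu1
  have := hpos u⁻¹ (by rw [norm_inv, hu1, inv_one])
  positivity

theorem differentiableOn_one_add_div_one_sub {ζ : ℂ} (hζ : ‖ζ‖ < 1) :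
    DifferentiableOn ℂ (fun u => (1 + ζ * u) / (1 - ζ * u)) (Metric.closedBall 0 1) := by
  intro u hu
  have hlt : ‖ζ * u‖ < 1 := by
    rw [norm_mul]
    exact mul_lt_one_of_nonneg_of_lt_one_left (norm_nonneg ζ) hζ (mem_closedBall_zero_iff.1 hu)
  have hne : 1 - ζ * u ≠ 0 := sub_ne_zero.2 fun h => by simp [← h] at hlt
  refine DifferentiableAt.differentiableWithinAt ?_
  fun_prop (disch := assumption)

theorem circleAverage_add_comp_inv {f : ℂ → ℂ} (hf : DifferentiableOn ℂ f (Metric.closedBall 0 1)) :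
    Real.circleAverage (fun u => f u + f u⁻¹) 0 1 = 2 * f 0 := by
  have hmean : Real.circleAverage f 0 1 = f 0 := DiffContOnCl.circleAverage (by
    rw [abs_one]
    exact (hf.mono Metric.closure_ball_subset_closedBall).diffContOnCl)
  have hcont : ContinuousOn f (Metric.sphere 0 1) :=
    hf.continuousOn.mono Metric.sphere_subset_closedBall
  have hinv : MapsTo (fun u : ℂ => u⁻¹) (Metric.sphere 0 1) (Metric.sphere 0 1) := fun u hu => by
    rw [mem_sphere_zero_iff_norm] at hu ⊢
    rw [norm_inv, hu, inv_one]
  have hcont' : ContinuousOn (fun u => f u⁻¹) (Metric.sphere 0 1) :=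
    hcont.comp (continuousOn_inv₀.mono fun u hu => ne_zero_of_mem_unit_sphere ⟨u, hu⟩) hinv
  rw [Real.circleAverage_fun_add (hcont.circleIntegrable zero_le_one)
    (hcont'.circleIntegrable zero_le_one), Real.circleAverage_zero_one_congr_inv, hmean, two_mul]

theorem integral_slitKernel {z : ℂ} (hz : z ∉ slit) : ∫ s, slitKernel z s ∂arcsineLaw = 1 := by
  have hcont : ContinuousOn (fun s : ℝ => wBranch (-1) 1 z / (z - s)) (Icc (-1) 1) :=
    continuousOn_const.div (by fun_prop) fun s hs => sub_ofReal_ne_zero hz ⟨s, hs⟩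
  simp only [slitKernel_apply hz]
  rw [integral_arcsineLaw_eq_circleAverage hcont]
  obtain ⟨ζ, hζ, hζ1, rfl⟩ := exists_joukowski_eq hz
  rw [Real.circleAverage_congr_sphere fun u hu => wBranch_div_joukowski_sub hζ hζ1
      (by rwa [abs_one, mem_sphere_zero_iff_norm] at hu),
    Real.circleAverage_fun_smul,
    circleAverage_add_comp_inv (differentiableOn_one_add_div_one_sub hζ1)]
  simp

end Kernel

section IntegralPairing

variable {X : Type*} [TopologicalSpace X] [CompactSpace X] [MeasurableSpace X]
  [OpensMeasurableSpace X] (μ : Measure X) [IsFiniteMeasure μ]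

/-- The bilinear pairing `(k, f) ↦ ∫ k f` on continuous functions on a compact space. -/
def integralPairing (𝕜 : Type*) [RCLike 𝕜] : C(X, 𝕜) →L[𝕜] C(X, 𝕜) →L[𝕜] 𝕜 :=
  ContinuousLinearMap.compL 𝕜 C(X, 𝕜) C(X, 𝕜) 𝕜 (integralContinuousMapCLM μ 𝕜) ∘L
    ContinuousLinearMap.mul 𝕜 C(X, 𝕜)

theorem integralPairing_apply {𝕜 : Type*} [RCLike 𝕜] (k f : C(X, 𝕜)) :
    integralPairing μ 𝕜 k f = ∫ x, k x * f x ∂μ :=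
  rfl

variable (X) in
/-- The inclusion of the real continuous functions in the complex ones. -/
def ofRealContinuousMapCLM : C(X, ℝ) →L[ℝ] C(X, ℂ) :=
  Complex.ofRealCLM.compLeftContinuous ℝ X

variable (X) in
/-- The real part of a complex continuous function. -/
def reContinuousMapCLM : C(X, ℂ) →L[ℝ] C(X, ℝ) :=
  Complex.reCLM.compLeftContinuous ℝ X

theorem re_integralPairing_ofReal (k : C(X, ℂ)) (v : C(X, ℝ)) :
    (integralPairing μ ℂ k (ofRealContinuousMapCLM X v)).re =
      integralPairing μ ℝ (reContinuousMapCLM X k) v := by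
  rw [integralPairing_apply, integralPairing_apply]
  exact (Complex.reCLM.integral_comp_comm
      (integrable_continuousMap μ (k * ofRealContinuousMapCLM X v))).symm.trans
    (integral_congr_ae (ae_of_all _ fun x => Complex.re_mul_ofReal (k x) (v x)))

theorem integralPairing_mono {k u v : C(X, ℝ)} (hk : 0 ≤ k) (huv : u ≤ v) :
    integralPairing μ ℝ k u ≤ integralPairing μ ℝ k v :=
  integral_mono (integrable_continuousMap μ (k * u)) (integrable_continuousMap μ (k * v))
    fun x => mul_le_mul_of_nonneg_left (huv x) (hk x)

end IntegralPairing

section HarmonicEvaluation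

theorem norm_slitKernel_sub_one_le {z : ℂ} (hz : 1 < ‖z‖) :
    ‖slitKernel z - 1‖ ≤ 2 / (‖z‖ - 1) := by
  have hnorm : ∀ s : Icc (-1 : ℝ) 1, ‖((s : ℝ) : ℂ)‖ ≤ 1 := fun s => by
    rw [Complex.norm_real]
    exact abs_le.2 s.2
  have hz' : z ∉ slit := by
    rintro ⟨x, hx, rfl⟩
    exact hz.not_ge (hnorm ⟨x, hx⟩)
  refine (ContinuousMap.norm_le _ (by have := sub_pos.2 hz; positivity)).2 fun s => ?_
  have hsplit : wBranch (-1) 1 z / (z - (s : ℝ)) - 1 =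
      (wBranch (-1) 1 z - z + (s : ℝ)) / (z - (s : ℝ)) := by
    rw [div_sub_one (sub_ofReal_ne_zero hz' s)]
    ring
  rw [ContinuousMap.sub_apply, ContinuousMap.one_apply, slitKernel_apply hz', hsplit, norm_div]
  have hnum := norm_add_le_of_le (norm_wBranch_sub_self_le hz') (hnorm s)
  have hden := (sub_le_sub_left (hnorm s) ‖z‖).trans (norm_sub_norm_le z _)
  have := sub_pos.2 hz
  gcongr
  linarith

theorem tendsto_slitKernel_cocompact : Tendsto slitKernel (cocompact ℂ) (𝓝 1) := by
  have hnorm : Tendsto (fun z : ℂ => ‖z‖) (cocompact ℂ) atTop := tendsto_norm_cocompact_atTop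
  refine tendsto_iff_norm_sub_tendsto_zero.2 (squeeze_zero'
    (Eventually.of_forall fun _ => norm_nonneg _) ?_
    ((tendsto_atTop_add_const_right _ (-1) hnorm).const_div_atTop 2))
  filter_upwards [hnorm.eventually_gt_atTop 1] with z hz
  exact norm_slitKernel_sub_one_le hz

/-- The Poisson kernel of `ℂ̄ ∖ [-1, 1]` with pole `z`, as a density with respect to
`arcsineLaw`. -/
def slitPoissonKernel (z : ℂ) : C(Icc (-1 : ℝ) 1, ℝ) := reContinuousMapCLM _ (slitKernel z)

theorem slitPoissonKernel_nonneg {z : ℂ} (hz : z ∉ slit) : 0 ≤ slitPoissonKernel z :=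
  re_slitKernel_nonneg hz

open Classical in
/-- The value at `z` of the harmonic extension of a continuous function on `[-1, 1]`, as a
functional of that function. -/
def harmEval (z : ℂ) : C(Icc (-1 : ℝ) 1, ℝ) →L[ℝ] ℝ :=
  if z ∈ slit then ContinuousMap.evalCLM ℝ (projIcc (-1) 1 (by norm_num) z.re)
  else integralPairing arcsineLaw ℝ (slitPoissonKernel z)

theorem harmEval_ofReal (s : Icc (-1 : ℝ) 1) (v : C(Icc (-1 : ℝ) 1, ℝ)) :
    harmEval (s : ℝ) v = v s := by
  rw [harmEval, if_pos ⟨s, s.2, rfl⟩, ContinuousMap.evalCLM_apply, Complex.ofReal_re, projIcc_val]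

theorem harmEval_of_notMem {z : ℂ} (hz : z ∉ slit) :
    harmEval z = integralPairing arcsineLaw ℝ (slitPoissonKernel z) :=
  if_neg hz

/-- The holomorphic function `z ↦ w(z) ∫ v(s) / (z - s) dω(s)` whose real part is the harmonic
extension of `v`. -/
def complexHarm (v : C(Icc (-1 : ℝ) 1, ℝ)) (z : ℂ) : ℂ :=
  integralPairing arcsineLaw ℂ (slitKernel z) (ofRealContinuousMapCLM _ v)

theorem re_complexHarm {z : ℂ} (hz : z ∉ slit) (v : C(Icc (-1 : ℝ) 1, ℝ)) :
    (complexHarm v z).re = harmEval z v := by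
  rw [complexHarm, re_integralPairing_ofReal, harmEval_of_notMem hz, slitPoissonKernel]

theorem differentiableOn_complexHarm (v : C(Icc (-1 : ℝ) 1, ℝ)) :
    DifferentiableOn ℂ (complexHarm v) slitᶜ :=
  (ContinuousLinearMap.differentiable (E := C(Icc (-1 : ℝ) 1, ℂ)) (F := ℂ)
    ((integralPairing arcsineLaw ℂ).flip (ofRealContinuousMapCLM _ v))).comp_differentiableOn
      differentiableOn_slitKernel

theorem tendsto_complexHarm_cocompact (v : C(Icc (-1 : ℝ) 1, ℝ)) :
    Tendsto (complexHarm v) (cocompact ℂ) (𝓝 (∫ s, v s ∂arcsineLaw : ℝ)) := by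
  have hlim := ((integralPairing arcsineLaw ℂ).flip
    (ofRealContinuousMapCLM _ v)).continuous.continuousAt.tendsto.comp tendsto_slitKernel_cocompact
  convert! hlim using 2
  rw [ContinuousLinearMap.flip_apply, integralPairing_apply, ← integral_complex_ofReal]
  exact integral_congr_ae (ae_of_all _ fun s => (one_mul _).symm)

theorem harmEval_mono (z : ℂ) : Monotone (harmEval z) := fun u v huv => by
  by_cases hz : z ∈ slit
  · obtain ⟨s, hs, rfl⟩ := hz
    rw [harmEval_ofReal ⟨s, hs⟩, harmEval_ofReal ⟨s, hs⟩]
    exact huv _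
  · rw [harmEval_of_notMem hz]
    exact integralPairing_mono _ (slitPoissonKernel_nonneg hz) huv

theorem harmEval_const (z : ℂ) (c : ℝ) : harmEval z (ContinuousMap.const _ c) = c := by
  by_cases hz : z ∈ slit
  · obtain ⟨s, hs, rfl⟩ := hz
    rw [harmEval_ofReal ⟨s, hs⟩, ContinuousMap.const_apply]
  · have hmass : complexHarm (ContinuousMap.const _ c) z = c := by
      rw [complexHarm, integralPairing_apply]
      exact (integral_mul_const (c : ℂ) _).trans (by rw [integral_slitKernel hz, one_mul])
    rw [← re_complexHarm hz, hmass, Complex.ofReal_re]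

theorem norm_harmEval_le (z : ℂ) : ‖harmEval z‖ ≤ 1 :=
  ContinuousLinearMap.opNorm_le_bound _ zero_le_one fun v => by
    have hupper := harmEval_mono z (show v ≤ ContinuousMap.const _ ‖v‖ from
      fun s => (le_abs_self _).trans (v.norm_coe_le_norm s))
    have hlower := harmEval_mono z (show ContinuousMap.const _ (-‖v‖) ≤ v from
      fun s => (abs_le.1 (v.norm_coe_le_norm s)).1)
    rw [harmEval_const] at hupper hlower
    rw [one_mul]
    exact abs_le.2 ⟨hlower, hupper⟩

theorem continuousOn_harmEval : ContinuousOn harmEval slitᶜ :=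
  (((integralPairing arcsineLaw ℝ).continuous.comp
    (reContinuousMapCLM _).continuous).comp_continuousOn
      differentiableOn_slitKernel.continuousOn).congr fun _ hz => harmEval_of_notMem hz

end HarmonicEvaluation

section Continuity

theorem integralPairing_slitKernel_slitInclusion_mul {z : ℂ} (hz : z ∉ slit)
    (f : C(Icc (-1 : ℝ) 1, ℂ)) :
    integralPairing arcsineLaw ℂ (slitKernel z) (slitInclusion * f) =
      z * integralPairing arcsineLaw ℂ (slitKernel z) f
        - wBranch (-1) 1 z * ∫ s, f s ∂arcsineLaw := by
  have hkernel : slitKernel z * (slitInclusion * f) =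
      z • (slitKernel z * f) - wBranch (-1) 1 z • f := by
    ext s
    have hne := sub_ofReal_ne_zero hz s
    have hs : slitInclusion s = (s : ℝ) := rfl
    simp only [ContinuousMap.mul_apply, ContinuousMap.sub_apply, ContinuousMap.smul_apply,
      smul_eq_mul, slitKernel_apply hz, hs]
    field_simp
    ring
  have hlin := congrArg (integralContinuousMapCLM arcsineLaw ℂ) hkernel
  rwa [map_sub, map_smul, map_smul] at hlin

theorem aeval_slitInclusion (p : ℝ[X]) :
    aeval slitInclusion p = ofRealContinuousMapCLM _ (p.toContinuousMapOn (Icc (-1 : ℝ) 1)) := by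
  ext s
  have heval := (aeval_algHom_apply (ContinuousMap.evalAlgHom ℝ ℂ s) slitInclusion p).symm
  exact heval.trans (aeval_algebraMap_apply_eq_algebraMap_eval (s : ℝ) p)

theorem exists_complexHarm_toContinuousMapOn_eq (p : ℝ[X]) : ∃ q : ℝ[X], ∀ z ∉ slit,
    complexHarm (p.toContinuousMapOn _) z = aeval z p - wBranch (-1) 1 z * aeval z q := by
  simp only [complexHarm, ← aeval_slitInclusion]
  induction p using Polynomial.induction_on with
  | C a =>
    refine ⟨0, fun z hz => ?_⟩
    have hmass := integral_slitKernel hz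
    rw [aeval_C, aeval_C, map_zero, mul_zero, sub_zero]
    exact (integral_mul_const (a : ℂ) _).trans (by rw [hmass, one_mul]; rfl)
  | add p₁ p₂ h₁ h₂ =>
    obtain ⟨q₁, h₁⟩ := h₁
    obtain ⟨q₂, h₂⟩ := h₂
    refine ⟨q₁ + q₂, fun z hz => ?_⟩
    rw [map_add, map_add, h₁ z hz, h₂ z hz, map_add, map_add]
    ring
  | monomial n a ih =>
    obtain ⟨q, hq⟩ := ih
    set p := C a * X ^ n with hp
    have hreal : ∫ s, aeval slitInclusion p s ∂arcsineLaw =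
        (∫ s, p.eval (s : ℝ) ∂(arcsineLaw) : ℝ) := by
      rw [aeval_slitInclusion, ← integral_complex_ofReal]
      rfl
    refine ⟨X * q + C (∫ s, p.eval (s : ℝ) ∂arcsineLaw), fun z hz => ?_⟩
    rw [pow_succ', mul_left_comm, ← hp, map_mul, aeval_X,
      integralPairing_slitKernel_slitInclusion_mul hz, hq z hz, hreal]
    simp only [map_add, map_mul, aeval_X, aeval_C, Complex.coe_algebraMap]
    ring

theorem re_sq_of_sq_eq {w f : ℂ} (h : w ^ 2 = f) : w.re ^ 2 = (‖f‖ + f.re) / 2 := by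
  rw [← h, norm_pow, ← Complex.normSq_eq_norm_sq, Complex.normSq_apply, sq w, Complex.mul_re]
  ring

theorem aeval_ofReal_eq_ofReal_eval (p : ℝ[X]) (x : ℝ) : aeval (x : ℂ) p = (p.eval x : ℝ) :=
  aeval_algebraMap_apply_eq_algebraMap_eval x p

-- On `[-1, 1]` the square `(z² - 1) q²` of `w q` is nonpositive, so `Re (w q)` vanishes there.
theorem exists_sq_harmEval_sub_re_aeval_eq (p : ℝ[X]) : ∃ q : ℝ[X], ∀ z,
    (harmEval z (p.toContinuousMapOn _) - (aeval z p).re) ^ 2 =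
      (‖(z ^ 2 - 1) * aeval z q ^ 2‖ + ((z ^ 2 - 1) * aeval z q ^ 2).re) / 2 := by
  obtain ⟨q, hq⟩ := exists_complexHarm_toContinuousMapOn_eq p
  refine ⟨q, fun z => ?_⟩
  by_cases hz : z ∈ slit
  · obtain ⟨x, hx, rfl⟩ := hz
    have hsq : (((x : ℂ) ^ 2 - 1) * aeval (x : ℂ) q ^ 2) = ((x ^ 2 - 1) * q.eval x ^ 2 : ℝ) := by
      rw [aeval_ofReal_eq_ofReal_eval]
      push_cast
      rfl
    have hnonpos : (x ^ 2 - 1) * q.eval x ^ 2 ≤ 0 :=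
      mul_nonpos_of_nonpos_of_nonneg (sub_nonpos.2 ((sq_le_one_iff_abs_le_one x).2 (abs_le.2 hx)))
        (sq_nonneg _)
    rw [harmEval_ofReal ⟨x, hx⟩, aeval_ofReal_eq_ofReal_eval, Complex.ofReal_re, hsq,
      Complex.norm_real, Real.norm_of_nonpos hnonpos, Complex.ofReal_re]
    simp
  · have hz1 : z ≠ (1 : ℝ) := fun h => hz ⟨1, by norm_num, h.symm⟩
    have hsq : (wBranch (-1) 1 z * aeval z q) ^ 2 = (z ^ 2 - 1) * aeval z q ^ 2 := by
      rw [mul_pow, wBranch_sq hz1]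
      push_cast
      ring
    rw [← re_complexHarm hz, hq z hz, ← re_sq_of_sq_eq hsq, Complex.sub_re]
    ring

theorem continuous_harmEval_toContinuousMapOn (p : ℝ[X]) :
    Continuous fun z => harmEval z (p.toContinuousMapOn _) := by
  obtain ⟨q, hq⟩ := exists_sq_harmEval_sub_re_aeval_eq p
  have hp : Continuous fun z : ℂ => (aeval z p).re :=
    Complex.continuous_re.comp p.continuous_aeval
  have hsq : Continuous fun z : ℂ =>
      (harmEval z (p.toContinuousMapOn _) - (aeval z p).re) ^ 2 := by
    have := q.continuous_aeval (A := ℂ)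
    simp only [hq]
    fun_prop
  refine continuous_iff_continuousAt.2 fun z => ?_
  by_cases hz : z ∈ slit
  · obtain ⟨x, hx, rfl⟩ := hz
    have hzero : harmEval (x : ℂ) (p.toContinuousMapOn _) - (aeval (x : ℂ) p).re = 0 := by
      rw [harmEval_ofReal ⟨x, hx⟩, aeval_ofReal_eq_ofReal_eval, Complex.ofReal_re]
      exact sub_self _
    have habs := (Real.continuous_sqrt.comp hsq).tendsto (x : ℂ)
    simp only [Function.comp_def, Real.sqrt_sq_eq_abs, hzero, abs_zero] at habs
    have hdiff := ((tendsto_zero_iff_abs_tendsto_zero _).2 habs).add (hp.tendsto (x : ℂ))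
    rw [← hzero] at hdiff
    simp only [sub_add_cancel] at hdiff
    exact hdiff
  · exact (continuousOn_harmEval.continuousAt
      (isCompact_slit.isClosed.isOpen_compl.mem_nhds hz)).clm_apply continuousAt_const

theorem continuous_harmEval (v : C(Icc (-1 : ℝ) 1, ℝ)) : Continuous fun z => harmEval z v := by
  refine continuous_of_uniform_approx_of_continuous fun u hu => ?_
  obtain ⟨ε, hε, hu⟩ := Metric.mem_uniformity_dist.1 hu
  obtain ⟨p, hp⟩ := exists_polynomial_near_continuousMap (-1) 1 v ε hε
  refine ⟨_, continuous_harmEval_toContinuousMapOn p, fun z => hu ?_⟩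
  rw [dist_comm, dist_eq_norm, ← map_sub]
  exact ((harmEval z).le_of_opNorm_le (norm_harmEval_le z) _).trans_lt (by rwa [one_mul])

theorem tendsto_harmEval_cocompact (v : C(Icc (-1 : ℝ) 1, ℝ)) :
    Tendsto (fun z => harmEval z v) (cocompact ℂ) (𝓝 (∫ s, v s ∂arcsineLaw)) := by
  have hre := (Complex.continuous_re.tendsto _).comp (tendsto_complexHarm_cocompact v)
  rw [Complex.ofReal_re] at hre
  refine hre.congr' ?_
  filter_upwards [isCompact_slit.compl_mem_cocompact] with z hz
  exact re_complexHarm hz v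

end Continuity

section MaximumPrinciple

theorem isPreconnected_compl_image_ofReal {K : Set ℝ} (hK : K ≠ univ) :
    IsPreconnected (Complex.ofReal '' K)ᶜ := by
  obtain ⟨x, hx⟩ := (ne_univ_iff_exists_notMem K).1 hK
  have hxK : (x : ℂ) ∈ (Complex.ofReal '' K)ᶜ := by
    rwa [mem_compl_iff, Complex.ofReal_injective.mem_set_image]
  have hreal : ∀ z : ℂ, z.im ≠ 0 → z ∈ (Complex.ofReal '' K)ᶜ := by
    rintro z hz ⟨y, -, rfl⟩
    exact hz (Complex.ofReal_im y)
  have hupper : IsPreconnected ({z : ℂ | 0 ≤ z.im} ∩ (Complex.ofReal '' K)ᶜ) := by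
    refine (convex_halfSpace_im_gt 0).isPreconnected.subset_closure
      (fun z (hz : 0 < z.im) => ⟨hz.le, hreal z hz.ne'⟩) ?_
    rw [Complex.closure_setOfPred_lt_im]
    exact inter_subset_left
  have hlower : IsPreconnected ({z : ℂ | z.im ≤ 0} ∩ (Complex.ofReal '' K)ᶜ) := by
    refine (convex_halfSpace_im_lt 0).isPreconnected.subset_closure
      (fun z (hz : z.im < 0) => ⟨hz.le, hreal z hz.ne⟩) ?_
    rw [Complex.closure_setOfPred_im_lt]
    exact inter_subset_left
  have hcover : {z : ℂ | 0 ≤ z.im} ∪ {z : ℂ | z.im ≤ 0} = univ :=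
    eq_univ_of_forall fun z => le_total 0 z.im
  rw [← univ_inter (Complex.ofReal '' K)ᶜ, ← hcover, union_inter_distrib_right]
  exact hupper.union (x : ℂ) (mem_inter (Complex.ofReal_im x).ge hxK)
    (mem_inter (Complex.ofReal_im x).le hxK) hlower

theorem dense_compl_image_ofReal (K : Set ℝ) : Dense (Complex.ofReal '' K)ᶜ := by
  have him : Dense (Complex.im ⁻¹' {0}ᶜ) :=
    (dense_compl_singleton (0 : ℝ)).preimage Complex.isOpenMap_im
  refine him.mono ?_
  rintro _ hz ⟨x, -, rfl⟩
  exact hz (Complex.ofReal_im x)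

theorem re_eqOn_of_isPreconnected_of_isMaxOn {E : Type*} [NormedAddCommGroup E] [NormedSpace ℂ E]
    {D : Set E} (hDc : IsPreconnected D) (hDo : IsOpen D) {h : E → ℂ} (hd : DifferentiableOn ℂ h D)
    {p : E} (hp : p ∈ D) (hmax : IsMaxOn (fun z => (h z).re) D p) {z : E} (hz : z ∈ D) :
    (h z).re = (h p).re := by
  have hexp := Complex.norm_eqOn_of_isPreconnected_of_isMaxOn hDc hDo hd.cexp hp
    (fun z hz => by
      simpa only [Function.comp_apply, Complex.norm_exp, Real.exp_le_exp] using hmax hz) hz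
  simpa only [Function.comp_apply, Function.const_apply, Complex.norm_exp, Real.exp_eq_exp]
    using hexp

-- The maximum principle at `∞`, after the inversion `ζ ↦ ζ⁻¹`.
theorem exists_re_le_re_of_tendsto_cocompact {h : ℂ → ℂ} {c : ℂ} {R : ℝ} (hR : 0 < R)
    (hd : DifferentiableOn ℂ h {z | R < ‖z‖}) (hlim : Tendsto h (cocompact ℂ) (𝓝 c)) :
    ∃ z, R < ‖z‖ ∧ c.re ≤ (h z).re := by
  by_contra! hlt
  set g : ℂ → ℂ := Function.update (fun ζ => h ζ⁻¹) 0 c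
  have hg0 : g 0 = c := Function.update_self ..
  have hg1 : ∀ ζ ≠ 0, g ζ = h ζ⁻¹ := fun ζ hζ => Function.update_of_ne hζ ..
  have hout : ∀ ζ ∈ Metric.ball (0 : ℂ) R⁻¹, ζ ≠ 0 → R < ‖ζ⁻¹‖ := fun ζ hζ hζ0 => by
    rw [norm_inv]
    exact (lt_inv_comm₀ (norm_pos_iff.2 hζ0) hR).1 (mem_ball_zero_iff.1 hζ)
  have hgd : DifferentiableOn ℂ g (Metric.ball 0 R⁻¹) := by
    refine (Complex.differentiableOn_compl_singleton_and_continuousAt_iff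
      (Metric.ball_mem_nhds (0 : ℂ) (inv_pos.2 hR))).1 ⟨?_, ?_⟩
    · have hcomp : DifferentiableOn ℂ (fun ζ => h ζ⁻¹) (Metric.ball 0 R⁻¹ \ {0}) :=
        hd.comp (fun ζ hζ => (differentiableAt_inv hζ.2).differentiableWithinAt)
          fun ζ hζ => hout ζ hζ.1 hζ.2
      exact hcomp.congr fun ζ hζ => hg1 ζ hζ.2
    · exact continuousAt_update_same.2
        (hlim.comp (tendsto_inv₀_nhdsNE_zero.trans Metric.cobounded_eq_cocompact.le))
  have hmax : IsMaxOn (fun ζ => (g ζ).re) (Metric.ball 0 R⁻¹) 0 := fun ζ hζ => by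
    rcases eq_or_ne ζ 0 with rfl | hζ0
    · exact le_refl (g 0).re
    · change (g ζ).re ≤ (g 0).re
      rw [hg0, hg1 ζ hζ0]
      exact (hlt _ (hout ζ hζ hζ0)).le
  have hmem : ((R⁻¹ / 2 : ℝ) : ℂ) ∈ Metric.ball (0 : ℂ) R⁻¹ := by
    rw [mem_ball_zero_iff, Complex.norm_of_nonneg (by positivity)]
    exact half_lt_self (inv_pos.2 hR)
  have hne : ((R⁻¹ / 2 : ℝ) : ℂ) ≠ 0 := Complex.ofReal_ne_zero.2 (by positivity)
  have heq := re_eqOn_of_isPreconnected_of_isMaxOn (convex_ball (0 : ℂ) R⁻¹).isPreconnected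
    Metric.isOpen_ball hgd (Metric.mem_ball_self (inv_pos.2 hR)) hmax hmem
  rw [hg0, hg1 _ hne] at heq
  exact (hlt _ (hout _ hmem hne)).ne heq

/-- `V` is continuous on `ℂ` and, off the subset `K` of the real line, it is the real part of a
single-valued holomorphic function with a limit at `∞`. This is how sums of harmonic extensions
from real intervals enter the maximum principle. -/
structure IsSlitHarmonic (K : Set ℝ) (V : ℂ → ℝ) : Prop where
  continuous : Continuous V
  exists_re_eq : ∃ (h : ℂ → ℂ) (c : ℂ), DifferentiableOn ℂ h (Complex.ofReal '' K)ᶜ ∧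
    Tendsto h (cocompact ℂ) (𝓝 c) ∧ ∀ z ∉ Complex.ofReal '' K, V z = (h z).re

namespace IsSlitHarmonic

theorem mono {K K' : Set ℝ} {V : ℂ → ℝ} (hV : IsSlitHarmonic K V) (hK : K ⊆ K') :
    IsSlitHarmonic K' V := by
  obtain ⟨h, c, hd, hlim, hre⟩ := hV.exists_re_eq
  exact ⟨hV.continuous, h, c, hd.mono (compl_subset_compl.2 (image_mono hK)), hlim,
    fun z hz => hre z fun hmem => hz (image_mono hK hmem)⟩

theorem neg {K : Set ℝ} {V : ℂ → ℝ} (hV : IsSlitHarmonic K V) :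
    IsSlitHarmonic K fun z => -V z := by
  obtain ⟨h, c, hd, hlim, hre⟩ := hV.exists_re_eq
  exact ⟨hV.continuous.neg, fun z => -h z, -c, hd.neg, hlim.neg, fun z hz => by
    rw [hre z hz, Complex.neg_re]⟩

theorem sum {ι : Type*} {s : Finset ι} {K : ι → Set ℝ} {U : ι → ℂ → ℝ}
    (hU : ∀ i ∈ s, IsSlitHarmonic (K i) (U i)) :
    IsSlitHarmonic (⋃ i ∈ s, K i) fun z => ∑ i ∈ s, U i z := by
  have hU' : ∀ i ∈ s, IsSlitHarmonic (⋃ i ∈ s, K i) (U i) := fun i hi =>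
    (hU i hi).mono (subset_biUnion_of_mem (u := K) hi)
  choose! h c hd hlim hre using fun i hi => (hU' i hi).exists_re_eq
  refine ⟨continuous_finsetSum _ fun i hi => (hU' i hi).continuous, fun z => ∑ i ∈ s, h i z,
    ∑ i ∈ s, c i, DifferentiableOn.fun_sum hd, tendsto_finsetSum _ hlim, fun z hz => ?_⟩
  rw [Complex.re_sum]
  exact Finset.sum_congr rfl fun i hi => hre i hi z hz

section SingleSet

variable {K : Set ℝ} {V : ℂ → ℝ}

theorem eq_of_forall_le (hV : IsSlitHarmonic K V) (hK : IsCompact K) {p : ℂ}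
    (hp : p ∉ Complex.ofReal '' K) (hmax : ∀ z, V z ≤ V p) (z : ℂ) : V z = V p := by
  obtain ⟨h, c, hd, -, hre⟩ := hV.exists_re_eq
  refine congrFun (hV.continuous.ext_on (dense_compl_image_ofReal K) continuous_const
    fun z hz => ?_) z
  have heq := re_eqOn_of_isPreconnected_of_isMaxOn (isPreconnected_compl_image_ofReal hK.ne_univ)
    (hK.image Complex.continuous_ofReal).isClosed.isOpen_compl hd hp
    (fun w hw => by
      change (h w).re ≤ (h p).re
      rw [← hre w hw, ← hre p hp]
      exact hmax w) hz
  rw [hre z hz, heq, hre p hp]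

theorem exists_forall_le (hV : IsSlitHarmonic K V) (hK : IsCompact K) :
    ∃ p, ∀ z, V z ≤ V p := by
  obtain ⟨h, c, hd, hlim, hre⟩ := hV.exists_re_eq
  have hVlim : Tendsto V (cocompact ℂ) (𝓝 c.re) := by
    refine ((Complex.continuous_re.tendsto c).comp hlim).congr' ?_
    filter_upwards [(hK.image Complex.continuous_ofReal).compl_mem_cocompact] with z hz
    exact (hre z hz).symm
  by_cases habove : ∃ z₁, c.re < V z₁
  · obtain ⟨z₁, hz₁⟩ := habove
    exact hV.continuous.exists_forall_ge' z₁
      ((hVlim.eventually_lt_const hz₁).mono fun z hz => hz.le)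
  · push Not at habove
    obtain ⟨R, hR0, hR⟩ := hK.isBounded.exists_pos_norm_le
    have hout : ∀ z : ℂ, R < ‖z‖ → z ∉ Complex.ofReal '' K := by
      rintro _ hz ⟨x, hx, rfl⟩
      exact hz.not_ge ((Complex.norm_real x).trans_le (hR x hx))
    obtain ⟨p, hpR, hp⟩ := exists_re_le_re_of_tendsto_cocompact hR0 (hd.mono hout) hlim
    exact ⟨p, fun z => (habove z).trans (hp.trans (hre p (hout p hpR)).ge)⟩

theorem exists_mem_forall_le (hV : IsSlitHarmonic K V) (hK : IsCompact K) (hne : K.Nonempty) :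
    ∃ x ∈ K, ∀ z, V z ≤ V (x : ℂ) := by
  obtain ⟨p, hp⟩ := hV.exists_forall_le hK
  by_cases hpK : p ∈ Complex.ofReal '' K
  · obtain ⟨x, hx, rfl⟩ := hpK
    exact ⟨x, hx, hp⟩
  · obtain ⟨x, hx⟩ := hne
    exact ⟨x, hx, fun z => (hp z).trans (hV.eq_of_forall_le hK hpK hp x).ge⟩

variable {c : ℝ}

theorem le_of_forall_mem_le (hV : IsSlitHarmonic K V) (hK : IsCompact K) (hne : K.Nonempty)
    (hc : ∀ x ∈ K, V x ≤ c) (z : ℂ) : V z ≤ c := by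
  obtain ⟨x, hx, hmax⟩ := hV.exists_mem_forall_le hK hne
  exact (hmax z).trans (hc x hx)

theorem ge_of_forall_mem_ge (hV : IsSlitHarmonic K V) (hK : IsCompact K) (hne : K.Nonempty)
    (hc : ∀ x ∈ K, c ≤ V x) (z : ℂ) : c ≤ V z :=
  neg_le_neg_iff.1 (hV.neg.le_of_forall_mem_le hK hne (fun x hx => neg_le_neg (hc x hx)) z)

theorem eq_of_forall_mem_eq (hV : IsSlitHarmonic K V) (hK : IsCompact K) (hne : K.Nonempty)
    (hc : ∀ x ∈ K, V x = c) (z : ℂ) : V z = c :=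
  (hV.le_of_forall_mem_le hK hne (fun x hx => (hc x hx).le) z).antisymm
    (hV.ge_of_forall_mem_ge hK hne (fun x hx => (hc x hx).ge) z)

end SingleSet

section System

variable {ι : Type*} [Fintype ι] {K : ι → Set ℝ} {U : ι → ℂ → ℝ}

/- At a maximum point `x ∈ K i` of `V = ∑ U j`, the function `V - U i`, which is harmonic across
`K i`, attains its maximum as well, so that it is constant. -/
theorem sum_eq_of_forall_sum_le (hU : ∀ i, IsSlitHarmonic (K i) (U i))
    (hK : ∀ i, IsCompact (K i)) (hdisj : Pairwise fun i j => Disjoint (K i) (K j))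
    (hneg : ∀ i, ∀ x ∈ K i, U i x = -∑ j, U j x) {i : ι} {x : ℝ} (hx : x ∈ K i)
    (hmax : ∀ z, ∑ j, U j z ≤ ∑ j, U j x) (z : ℂ) : ∑ j, U j z = ∑ j, U j x := by
  classical
  set C := ∑ j, U j x
  have hsplit : ∀ z, U i z + ∑ j ∈ Finset.univ.erase i, U j z = ∑ j, U j z := fun z =>
    Finset.add_sum_erase _ (fun j => U j z) (Finset.mem_univ i)
  have hlower : ∀ z, -C ≤ U i z := (hU i).ge_of_forall_mem_ge (hK i) ⟨x, hx⟩ fun y hy => by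
    rw [hneg i y hy]
    exact neg_le_neg (hmax y)
  have hxK : (x : ℂ) ∉ Complex.ofReal '' ⋃ j ∈ Finset.univ.erase i, K j := by
    rw [Complex.ofReal_injective.mem_set_image, mem_iUnion₂]
    rintro ⟨j, hj, hxj⟩
    exact disjoint_left.1 (hdisj (Finset.ne_of_mem_erase hj)) hxj hx
  have hothers : ∀ z, ∑ j ∈ Finset.univ.erase i, U j z = 2 * C := fun z => by
    rw [(IsSlitHarmonic.sum fun j _ => hU j).eq_of_forall_le
      (Finset.isCompact_biUnion _ fun j _ => hK j) hxK (fun z => ?_) z]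
    · linarith [hsplit x, hneg i x hx]
    · linarith [hsplit x, hneg i x hx, hsplit z, hlower z, hmax z]
  have hUi : ∀ z, U i z = -C := (hU i).eq_of_forall_mem_eq (hK i) ⟨x, hx⟩ fun y hy => by
    linarith [hsplit y, hneg i y hy, hothers y]
  linarith [hsplit z, hUi z, hothers z]

theorem eq_zero_of_eq_neg_sum (hU : ∀ i, IsSlitHarmonic (K i) (U i))
    (hK : ∀ i, IsCompact (K i)) (hne : ∀ i, (K i).Nonempty)
    (hdisj : Pairwise fun i j => Disjoint (K i) (K j))
    (hneg : ∀ i, ∀ x ∈ K i, U i x = -∑ j, U j x) (i : ι) (z : ℂ) : U i z = 0 := by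
  obtain ⟨x, hx, hmax⟩ := (IsSlitHarmonic.sum fun i _ => hU i).exists_mem_forall_le
    (Finset.univ.isCompact_biUnion fun i _ => hK i)
    ((hne i).mono (subset_biUnion_of_mem (u := K) (Finset.mem_univ i)))
  obtain ⟨k, -, hxk⟩ := mem_iUnion₂.1 hx
  have hsum := sum_eq_of_forall_sum_le hU hK hdisj hneg hxk hmax
  set C := ∑ j, U j x
  have hconst : ∀ j z, U j z = -C := fun j => (hU j).eq_of_forall_mem_eq (hK j) (hne j)
    fun y hy => by rw [hneg j y hy, hsum]
  have hcard : -(Fintype.card ι * C) = C := by simpa [hconst] using hsum z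
  have hzero : (Fintype.card ι + 1) * C = 0 := by linarith
  rw [hconst, (mul_eq_zero_iff_left (by positivity)).1 hzero, neg_zero]

end System

end IsSlitHarmonic

end MaximumPrinciple

section UniformConvergence

theorem tendstoUniformlyOnFilter_of_tendsto {ι X Y : Type*} [UniformSpace Y] {F : ι → X → Y}
    {f : X → Y} {c : Y} {l : Filter ι} {l' : Filter X} (hF : Tendsto (↿F) (l ×ˢ l') (𝓝 c))
    (hf : Tendsto f l' (𝓝 c)) : TendstoUniformlyOnFilter F f l l' :=
  tendstoUniformlyOnFilter_iff_tendsto.2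
    (((hf.comp tendsto_snd).prodMk_nhds hF).mono_right (nhds_le_uniformity c))

theorem tendstoUniformly_of_tendsto_cocompact {ι X Y : Type*} [TopologicalSpace X] [UniformSpace Y]
    {F : ι → X → Y} {f : X → Y} {c : Y} {l : Filter ι} (hf : Continuous f)
    (hF : ∀ x, Tendsto (↿F) (l ×ˢ 𝓝 x) (𝓝 (f x))) (hf' : Tendsto f (cocompact X) (𝓝 c))
    (hF' : Tendsto (↿F) (l ×ˢ cocompact X) (𝓝 c)) : TendstoUniformly F f l := by
  have hloc : TendstoLocallyUniformly F f l := tendstoLocallyUniformly_iff_filter.2 fun x =>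
    tendstoUniformlyOnFilter_of_tendsto (hF x) hf.continuousAt
  intro u hu
  obtain ⟨p, hp, q, hq, hpq⟩ :=
    eventually_prod_iff.1 (tendstoUniformlyOnFilter_of_tendsto hF' hf' u hu)
  obtain ⟨K, hK, hKq⟩ := mem_cocompact.1 hq
  have hcompact := (tendstoLocallyUniformlyOn_iff_tendstoUniformlyOn_of_compact hK).1
    hloc.tendstoLocallyUniformlyOn
  filter_upwards [hp, hcompact u hu] with n hn hnK x
  by_cases hx : x ∈ K
  · exact hnK x hx
  · exact hpq hn (hKq hx)

theorem tendstoUniformly_comp_of_tendstoUniformlyOn {ι X Y Z : Type*} {l : Filter ι}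
    [UniformSpace Y] [UniformSpace Z] {J : Set Y} {G : ι → Y → Z} {g : Y → Z} {F : ι → X → Y}
    {f : X → Y} (hG : TendstoUniformlyOn G g l J) (hg : UniformContinuousOn g J)
    (hF : TendstoUniformly F f l) (hFJ : ∀ n x, F n x ∈ J) (hfJ : ∀ x, f x ∈ J) :
    TendstoUniformly (fun n x => G n (F n x)) (fun x => g (f x)) l := by
  have hgF := hg.comp_tendstoUniformly hFJ hfJ hF
  intro u hu
  obtain ⟨t, ht, htu⟩ := comp_mem_uniformity_sets hu
  filter_upwards [hG t ht, hgF t ht] with n hGn hgFn x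
  exact htu ⟨_, hgFn x, hGn _ (hFJ n x)⟩

theorem tendsto_continuousMap_pi_iff {ι X Y κ : Type*} {l : Filter ι} [TopologicalSpace X]
    [CompactSpace X] [UniformSpace Y] [Finite κ] {wn : ι → C(X, κ → Y)} {w : C(X, κ → Y)} :
    Tendsto wn l (𝓝 w) ↔ ∀ i, TendstoUniformly (fun n x => wn n x i) (fun x => w x i) l := by
  rw [ContinuousMap.tendsto_iff_tendstoUniformly]
  simp only [tendstoUniformly_iff_tendsto, Pi.uniformity, tendsto_iInf, tendsto_comap_iff]
  rfl

end UniformConvergence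

section Coordinate

/-- The affine coordinate on `ℂ` which carries `[a, b]` to the slit `[-1, 1]`. -/
def slitCoord (a b : ℝ) (z : ℂ) : ℂ := (2 * z - (a + b)) / (b - a)

variable {a b : ℝ}

theorem slitCoord_affIcc (hab : a ≠ b) (s : ℝ) : slitCoord a b (affIcc (-1) 1 a b s) = s := by
  have hba : (b : ℂ) - a ≠ 0 := sub_ne_zero.2 (Complex.ofReal_injective.ne hab.symm)
  simp only [slitCoord, affIcc]
  push_cast
  field_simp
  ring

theorem slitCoord_sub (z w : ℂ) :
    slitCoord a b z - slitCoord a b w = 2 / (b - a) * (z - w) := by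
  simp only [slitCoord]
  ring

theorem slitCoord_injective (hab : a ≠ b) : Function.Injective (slitCoord a b) := fun z w hzw => by
  have hba : (b : ℂ) - a ≠ 0 := sub_ne_zero.2 (Complex.ofReal_injective.ne hab.symm)
  rw [← sub_eq_zero, slitCoord_sub] at hzw
  exact sub_eq_zero.1 ((mul_eq_zero_iff_left (div_ne_zero two_ne_zero hba)).1 hzw)

theorem slitCoord_mem_slit_iff (hab : a < b) {z : ℂ} :
    slitCoord a b z ∈ slit ↔ z ∈ Complex.ofReal '' Icc a b := by
  rw [← (bijOn_affIcc (show (-1 : ℝ) < 1 by norm_num) hab).image_eq, image_image]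
  constructor
  · rintro ⟨s, hs, hsz⟩
    exact ⟨s, hs, slitCoord_injective hab.ne ((slitCoord_affIcc hab.ne s).trans hsz)⟩
  · rintro ⟨s, hs, rfl⟩
    exact ⟨s, hs, (slitCoord_affIcc hab.ne s).symm⟩

theorem wBranch_eq_wBranch_slitCoord (hab : a ≠ b) (z : ℂ) :
    wBranch a b z = (b - a) / 2 * wBranch (-1) 1 (slitCoord a b z) := by
  have hba : (b : ℂ) - a ≠ 0 := sub_ne_zero.2 (Complex.ofReal_injective.ne hab.symm)
  have hleft : slitCoord a b z - (-1 : ℝ) = 2 / (b - a) * (z - a) := by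
    simp only [slitCoord]
    push_cast
    field_simp
    ring
  have hright : slitCoord a b z - (1 : ℝ) = 2 / (b - a) * (z - b) := by
    simp only [slitCoord]
    push_cast
    field_simp
    ring
  rw [wBranch, wBranch, hleft, hright, mul_div_mul_left _ _ (div_ne_zero two_ne_zero hba)]
  field_simp

theorem harmExt_eq_harmEval (hab : a < b) {u : ℝ → ℝ} {v : C(Icc (-1 : ℝ) 1, ℝ)}
    (hv : ∀ s, v s = u (affIcc (-1) 1 a b s)) {z : ℂ} (hz : z ∉ Complex.ofReal '' Icc a b) :
    harmExt a b u z = harmEval (slitCoord a b z) v := by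
  have hz' : slitCoord a b z ∉ slit := (slitCoord_mem_slit_iff hab).not.2 hz
  have hba : (b : ℂ) - a ≠ 0 := sub_ne_zero.2 (Complex.ofReal_injective.ne hab.ne')
  rw [harmExt, cauchyT, integral_arcsineMeasure_eq_integral_arcsineLaw hab, ← re_complexHarm hz',
    complexHarm, integralPairing_apply, ← integral_const_mul]
  congr 2 with s
  have hden : z - affIcc (-1) 1 a b s = (b - a) / 2 * (slitCoord a b z - (s : ℝ)) := by
    rw [← slitCoord_affIcc hab.ne s, slitCoord_sub]
    field_simp
  have hs := sub_ofReal_ne_zero hz' s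
  change _ = slitKernel (slitCoord a b z) s * (v s : ℂ)
  rw [slitKernel_apply hz', wBranch_eq_wBranch_slitCoord hab.ne, hden, hv]
  field_simp

theorem continuousAt_slitCoord (hab : a ≠ b) (z : ℂ) :
    ContinuousAt (fun p : (ℝ × ℝ) × ℂ => slitCoord p.1.1 p.1.2 p.2) ((a, b), z) := by
  have hba : (b : ℂ) - a ≠ 0 := sub_ne_zero.2 (Complex.ofReal_injective.ne hab.symm)
  unfold slitCoord
  fun_prop (disch := exact hba)

theorem tendsto_slitCoord_cocompact (hab : a ≠ b) :
    Tendsto (fun p : (ℝ × ℝ) × ℂ => slitCoord p.1.1 p.1.2 p.2) (𝓝 (a, b) ×ˢ cocompact ℂ)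
      (cocompact ℂ) := by
  have hba : (b : ℂ) - a ≠ 0 := sub_ne_zero.2 (Complex.ofReal_injective.ne hab.symm)
  have hslope : ContinuousAt (fun p : ℝ × ℝ => ‖2 / ((p.2 : ℂ) - p.1)‖) (a, b) := by
    fun_prop (disch := exact hba)
  have horigin : ContinuousAt (fun p : ℝ × ℝ => -‖slitCoord p.1 p.2 0‖) (a, b) := by
    unfold slitCoord
    fun_prop (disch := exact hba)
  have hnorm : Tendsto (fun p : (ℝ × ℝ) × ℂ => ‖p.2‖) (𝓝 (a, b) ×ˢ cocompact ℂ) atTop :=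
    tendsto_norm_cocompact_atTop.comp tendsto_snd
  rw [← Metric.cobounded_eq_cocompact, ← tendsto_norm_atTop_iff_cobounded,
    Metric.cobounded_eq_cocompact]
  refine tendsto_atTop_mono (fun p => ?_) (((hslope.tendsto.comp tendsto_fst).pos_mul_atTop
    (norm_pos_iff.2 (div_ne_zero two_ne_zero hba)) hnorm).atTop_add
      (horigin.tendsto.comp tendsto_fst))
  have hsub := slitCoord_sub (a := p.1.1) (b := p.1.2) p.2 0
  rw [sub_zero] at hsub
  change ‖2 / ((p.1.2 : ℂ) - p.1.1)‖ * ‖p.2‖ + -‖slitCoord p.1.1 p.1.2 0‖ ≤ _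
  rw [← sub_eq_add_neg, sub_le_iff_le_add, ← norm_mul, ← hsub]
  exact norm_sub_le _ _

theorem isSlitHarmonic_harmEval_slitCoord (hab : a < b) (v : C(Icc (-1 : ℝ) 1, ℝ)) :
    IsSlitHarmonic (Icc a b) fun z => harmEval (slitCoord a b z) v := by
  have hcoord : Differentiable ℂ (slitCoord a b) := by
    unfold slitCoord
    fun_prop
  have hconst : Tendsto (fun z => ((a, b), z)) (cocompact ℂ) (𝓝 (a, b) ×ˢ cocompact ℂ) :=
    tendsto_const_nhds.prodMk tendsto_id
  have hcoord' := (tendsto_slitCoord_cocompact hab.ne).comp hconst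
  have hmaps : ∀ z ∉ Complex.ofReal '' Icc a b, slitCoord a b z ∉ slit := fun z hz =>
    (slitCoord_mem_slit_iff hab).not.2 hz
  refine ⟨(continuous_harmEval v).comp hcoord.continuous,
    fun z => complexHarm v (slitCoord a b z), (∫ s, v s ∂arcsineLaw : ℝ), ?_, ?_, fun z hz => ?_⟩
  · exact (differentiableOn_complexHarm v).comp hcoord.differentiableOn hmaps
  · exact (tendsto_complexHarm_cocompact v).comp hcoord'
  · exact (re_complexHarm (hmaps z hz) v).symm

theorem tendstoUniformly_harmEval_slitCoord {ι : Type*} {l : Filter ι} {an bn : ι → ℝ}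
    (hab : a ≠ b) (ha : Tendsto an l (𝓝 a)) (hb : Tendsto bn l (𝓝 b))
    (v : C(Icc (-1 : ℝ) 1, ℝ)) :
    TendstoUniformly (fun n z => harmEval (slitCoord (an n) (bn n) z) v)
      (fun z => harmEval (slitCoord a b z) v) l := by
  have hparam : Tendsto (fun n => (an n, bn n)) l (𝓝 (a, b)) := ha.prodMk_nhds hb
  have hcont : ∀ z, Tendsto (fun p : (ℝ × ℝ) × ℂ => harmEval (slitCoord p.1.1 p.1.2 p.2) v)
      (𝓝 (a, b) ×ˢ 𝓝 z) (𝓝 (harmEval (slitCoord a b z) v)) := fun z => by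
    rw [← nhds_prod_eq]
    exact ((continuous_harmEval v).tendsto _).comp (continuousAt_slitCoord hab z)
  have hlim : Tendsto (fun p : (ℝ × ℝ) × ℂ => harmEval (slitCoord p.1.1 p.1.2 p.2) v)
      (𝓝 (a, b) ×ˢ cocompact ℂ) (𝓝 (∫ s, v s ∂arcsineLaw)) :=
    (tendsto_harmEval_cocompact v).comp (tendsto_slitCoord_cocompact hab)
  have hconst : ∀ l' : Filter ℂ, Tendsto (fun z => ((a, b), z)) l' (𝓝 (a, b) ×ˢ l') := fun l' =>
    tendsto_const_nhds.prodMk tendsto_id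
  have hslice := fun z => (hcont z).comp (hconst (𝓝 z))
  have hjoint := fun z => (hcont z).comp (hparam.prodMap tendsto_id)
  have hslice' := hlim.comp (hconst (cocompact ℂ))
  have hjoint' := hlim.comp (hparam.prodMap tendsto_id)
  exact tendstoUniformly_of_tendsto_cocompact (continuous_iff_continuousAt.2 hslice) hjoint hslice'
    hjoint'

theorem tendstoUniformly_harmEval_slitCoord_of_tendsto {ι : Type*} {l : Filter ι} {an bn : ι → ℝ}
    (hab : a ≠ b) (ha : Tendsto an l (𝓝 a)) (hb : Tendsto bn l (𝓝 b))
    {vn : ι → C(Icc (-1 : ℝ) 1, ℝ)} {v : C(Icc (-1 : ℝ) 1, ℝ)} (hv : Tendsto vn l (𝓝 v)) :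
    TendstoUniformly (fun n z => harmEval (slitCoord (an n) (bn n) z) (vn n))
      (fun z => harmEval (slitCoord a b z) v) l := by
  have hfixed := tendstoUniformly_harmEval_slitCoord hab ha hb v
  rw [Metric.tendstoUniformly_iff] at hfixed ⊢
  intro ε hε
  filter_upwards [hfixed (ε / 2) (half_pos hε),
    hv.eventually (Metric.ball_mem_nhds v (half_pos hε))] with n hn hvn z
  have hnorm : dist (harmEval (slitCoord (an n) (bn n) z) v)
      (harmEval (slitCoord (an n) (bn n) z) (vn n)) ≤ dist (vn n) v := by
    rw [dist_comm (vn n), dist_eq_norm, dist_eq_norm, ← map_sub]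
    exact ((harmEval _).le_of_opNorm_le (norm_harmEval_le _) _).trans_eq (one_mul _)
  calc _ ≤ _ := dist_triangle _ (harmEval (slitCoord (an n) (bn n) z) v) _
    _ < ε / 2 + ε / 2 := add_lt_add (hn z) (hnorm.trans_lt hvn)
    _ = ε := add_halves ε

end Coordinate

section FlipCLM

variable {X E F : Type*} [TopologicalSpace X] [CompactSpace X] [NormedAddCommGroup E]
  [NormedSpace ℝ E] [NormedAddCommGroup F] [NormedSpace ℝ F]

/-- The operator `v ↦ (x ↦ k x v)` associated with a continuous family `k` of continuous linear
maps. -/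
def flipCLM : C(X, E →L[ℝ] F) →L[ℝ] E →L[ℝ] C(X, F) :=
  LinearMap.mkContinuous₂
    (LinearMap.mk₂ ℝ (fun (k : C(X, E →L[ℝ] F)) v => (⟨fun x => k x v, by fun_prop⟩ : C(X, F)))
      (fun _ _ _ => rfl) (fun _ _ _ => rfl)
      (fun k v w => ContinuousMap.ext fun x => map_add (k x) v w)
      (fun c k v => ContinuousMap.ext fun x => map_smul (k x) c v)) 1 fun k v => by
    rw [one_mul]
    exact (ContinuousMap.norm_le _ (by positivity)).2 fun x =>
      (k x).le_of_opNorm_le (k.norm_coe_le_norm x) v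

theorem flipCLM_apply (k : C(X, E →L[ℝ] F)) (v : E) (x : X) : flipCLM k v x = k x v :=
  rfl

theorem equicontinuous_flipCLM (k : C(X, E →L[ℝ] F)) :
    Equicontinuous fun (v : Metric.closedBall (0 : E) 1) x => flipCLM k v x := fun x => by
  refine Metric.equicontinuousAt_of_continuity_modulus (fun y => dist (k x) (k y)) ?_ _
    (Eventually.of_forall fun y v => ?_)
  · have hdist : Continuous fun y => dist (k x) (k y) := by fun_prop
    exact hdist.tendsto' x 0 (dist_self _)
  · rw [flipCLM_apply, flipCLM_apply, dist_eq_norm, dist_eq_norm, ← _root_.sub_apply]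
    exact (k x - k y).unit_le_opNorm v (mem_closedBall_zero_iff.1 v.2)

theorem isCompactOperator_flipCLM [ProperSpace F] (k : C(X, E →L[ℝ] F)) :
    IsCompactOperator (flipCLM k) := by
  let e := (ContinuousMap.linearIsometryBoundedOfCompact X F ℝ).toContinuousLinearEquiv
  suffices h : IsCompactOperator (e.toContinuousLinearMap ∘L flipCLM k) by
    convert! h.clm_comp e.symm.toContinuousLinearMap using 1
  refine (isCompactOperator_iff_isCompact_closure_image_closedBall (𝕜₁ := ℝ)
    (e.toContinuousLinearMap ∘L flipCLM k).toLinearMap one_pos).2 ?_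
  refine BoundedContinuousFunction.arzela_ascoli (Metric.closedBall 0 ‖k‖)
    (isCompact_closedBall _ _) _ ?_ ?_
  · rintro _ x ⟨v, hv, rfl⟩
    rw [mem_closedBall_zero_iff] at hv ⊢
    exact ((k x).unit_le_opNorm v hv).trans (k.norm_coe_le_norm x)
  · intro x u hu
    filter_upwards [equicontinuous_flipCLM k x u hu] with y hy
    rintro ⟨_, v, hv, rfl⟩
    exact hy ⟨v, hv⟩

end FlipCLM

section IntervalSystem

variable {d : ℕ}

/-- Systems of `d` pairwise disjoint nondegenerate closed intervals, each given by the pair of its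
endpoints. -/
abbrev IntervalSystem (d : ℕ) : Type :=
  {c : Fin d → ℝ × ℝ // (∀ i, (c i).1 < (c i).2) ∧
    Pairwise fun i j => Disjoint (Icc (c i).1 (c i).2) (Icc (c j).1 (c j).2)}

namespace IntervalSystem

variable (c : IntervalSystem d)

/-- The left endpoints of a system. -/
def left (i : Fin d) : ℝ := (c.1 i).1

/-- The right endpoints of a system. -/
def right (i : Fin d) : ℝ := (c.1 i).2

/-- The `i`-th interval of a system. -/
def interval (i : Fin d) : Set ℝ := Icc (c.left i) (c.right i)

theorem left_lt_right (i : Fin d) : c.left i < c.right i := c.2.1 i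

/-- The affine parametrization of the `i`-th interval by `[-1, 1]`. -/
def param (i : Fin d) (s : ℝ) : ℝ := affIcc (-1) 1 (c.left i) (c.right i) s

/-- The affine coordinate on `ℂ` which carries the `i`-th interval to the slit `[-1, 1]`. -/
def coord (i : Fin d) (z : ℂ) : ℂ := slitCoord (c.left i) (c.right i) z

theorem coord_param (i : Fin d) (s : ℝ) : c.coord i (c.param i s) = s :=
  slitCoord_affIcc (c.left_lt_right i).ne s

theorem bijOn_param (i : Fin d) : BijOn (c.param i) (Icc (-1) 1) (c.interval i) :=
  bijOn_affIcc (by norm_num) (c.left_lt_right i)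

theorem coord_mem_slit_iff {i : Fin d} {z : ℂ} :
    c.coord i z ∈ slit ↔ z ∈ Complex.ofReal '' c.interval i :=
  slitCoord_mem_slit_iff (c.left_lt_right i)

theorem param_notMem_interval {i j : Fin d} (hij : i ≠ j) (s : Icc (-1 : ℝ) 1) :
    c.param i s ∉ c.interval j :=
  disjoint_left.1 (c.2.2 hij) ((c.bijOn_param i).mapsTo s.2)

theorem coord_param_notMem_slit {i j : Fin d} (hij : i ≠ j) (s : Icc (-1 : ℝ) 1) :
    c.coord j (c.param i s) ∉ slit := by
  rw [coord_mem_slit_iff, Complex.ofReal_injective.mem_set_image]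
  exact c.param_notMem_interval hij s

@[fun_prop]
theorem continuous_left (i : Fin d) : Continuous fun c : IntervalSystem d => c.left i :=
  continuous_fst.comp ((continuous_apply i).comp continuous_subtype_val)

@[fun_prop]
theorem continuous_right (i : Fin d) : Continuous fun c : IntervalSystem d => c.right i :=
  continuous_snd.comp ((continuous_apply i).comp continuous_subtype_val)

theorem continuous_param (i : Fin d) :
    Continuous fun p : IntervalSystem d × Icc (-1 : ℝ) 1 => p.1.param i p.2 := by
  unfold param affIcc
  fun_prop (disch := norm_num)

theorem continuous_harmEval_coord_param {i j : Fin d} (hij : i ≠ j) :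
    Continuous fun p : IntervalSystem d × Icc (-1 : ℝ) 1 =>
      harmEval (p.1.coord j (p.1.param i p.2)) := by
  have hcoord : Continuous fun p : IntervalSystem d × Icc (-1 : ℝ) 1 =>
      p.1.coord j (p.1.param i p.2) := continuous_iff_continuousAt.2 fun p => by
    have hparam := continuous_param (d := d) i
    have hpair : ContinuousAt (fun p : IntervalSystem d × Icc (-1 : ℝ) 1 =>
        ((p.1.left j, p.1.right j), (p.1.param i p.2 : ℂ))) p := by fun_prop
    have h := (continuousAt_slitCoord (p.1.left_lt_right j).ne _).comp_of_eq hpair rfl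
    exact h
  exact continuousOn_harmEval.comp_continuous hcoord fun p => p.1.coord_param_notMem_slit hij p.2

end IntervalSystem

end IntervalSystem

section Operator

variable {d : ℕ}

/-- The `j`-th component of a vector-function on `[-1, 1]`. -/
def component (j : Fin d) : C(Icc (-1 : ℝ) 1, Fin d → ℝ) →L[ℝ] C(Icc (-1 : ℝ) 1, ℝ) :=
  (ContinuousLinearMap.proj j).compLeftContinuous ℝ _

theorem component_apply (j : Fin d) (v : C(Icc (-1 : ℝ) 1, Fin d → ℝ)) (s : Icc (-1 : ℝ) 1) :
    component j v s = v s j :=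
  rfl

/-- The joint kernel `(c, s) ↦ (v ↦ (ℋ v)(s))` of the operators `ℋ` of all systems `c`, when the
intervals of `c` are parametrized by `[-1, 1]`. -/
def calHKernel : C(IntervalSystem d × Icc (-1 : ℝ) 1,
    C(Icc (-1 : ℝ) 1, Fin d → ℝ) →L[ℝ] Fin d → ℝ) where
  toFun p := ContinuousLinearMap.piEquivL ℝ C(Icc (-1 : ℝ) 1, Fin d → ℝ) (fun _ => ℝ) fun i =>
    -(1 / 2 : ℝ) • ∑ j ∈ Finset.univ.erase i,
      harmEval (p.1.coord j (p.1.param i p.2)) ∘L component j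
  continuous_toFun := by
    have hterm : ∀ i, ∀ j ∈ Finset.univ.erase i, Continuous
        fun p : IntervalSystem d × Icc (-1 : ℝ) 1 =>
          harmEval (p.1.coord j (p.1.param i p.2)) ∘L component j := fun i j hj =>
      (IntervalSystem.continuous_harmEval_coord_param
        (Finset.ne_of_mem_erase hj).symm).clm_comp continuous_const
    exact (ContinuousLinearMap.piEquivL ℝ _ _).continuous.comp (continuous_pi fun i =>
      (continuous_const_smul (-(1 / 2 : ℝ))).comp (continuous_finsetSum _ (hterm i)))

/-- The operator `ℋ` of a system of intervals, transported to vector-functions on `[-1, 1]` by the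
affine parametrizations of the intervals. -/
def calHOperator (c : IntervalSystem d) :
    C(Icc (-1 : ℝ) 1, Fin d → ℝ) →L[ℝ] C(Icc (-1 : ℝ) 1, Fin d → ℝ) :=
  flipCLM (calHKernel.curry c)

theorem calHOperator_apply (c : IntervalSystem d) (v : C(Icc (-1 : ℝ) 1, Fin d → ℝ))
    (s : Icc (-1 : ℝ) 1) (i : Fin d) :
    calHOperator c v s i = -(1 / 2) * ∑ j ∈ Finset.univ.erase i,
      harmEval (c.coord j (c.param i s)) (component j v) := by
  change (-(1 / 2 : ℝ) • ∑ j ∈ Finset.univ.erase i,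
      harmEval (c.coord j (c.param i s)) ∘L component j) v = _
  simp

theorem continuous_calHOperator : Continuous (calHOperator (d := d)) :=
  flipCLM.continuous.comp calHKernel.curry.continuous

theorem isCompactOperator_calHOperator (c : IntervalSystem d) :
    IsCompactOperator (calHOperator c) :=
  isCompactOperator_flipCLM _

end Operator

section Uniqueness

theorem eq_zero_of_calHOperator_eq_self {d : ℕ} (c : IntervalSystem d)
    {v : C(Icc (-1 : ℝ) 1, Fin d → ℝ)} (hv : calHOperator c v = v) : v = 0 := by
  set U : Fin d → ℂ → ℝ := fun i z => harmEval (c.coord i z) (component i v) with hU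
  have hparam : ∀ i (s : Icc (-1 : ℝ) 1), U i (c.param i s) = v s i := fun i s => by
    simp only [hU, c.coord_param, harmEval_ofReal, component_apply]
  have hneg : ∀ i, ∀ x ∈ c.interval i, U i x = -∑ j, U j x := fun i x hx => by
    obtain ⟨s, hs, rfl⟩ := (c.bijOn_param i).surjOn hx
    have hfix := calHOperator_apply c v ⟨s, hs⟩ i
    rw [hv, ← hparam i ⟨s, hs⟩] at hfix
    linarith [Finset.add_sum_erase _ (fun j => U j (c.param i s)) (Finset.mem_univ i)]
  ext s i
  rw [← hparam i s]
  exact IsSlitHarmonic.eq_zero_of_eq_neg_sum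
    (fun i => isSlitHarmonic_harmEval_slitCoord (c.left_lt_right i) _) (fun i => isCompact_Icc)
    (fun i => nonempty_Icc.2 (c.left_lt_right i).le) c.2.2 hneg i _

end Uniqueness

section Stability

theorem isUnit_one_sub_of_isCompactOperator {X : Type*} [NormedAddCommGroup X] [NormedSpace ℝ X]
    [CompleteSpace X] {T : X →L[ℝ] X} (hT : IsCompactOperator T) (hinj : ∀ v, T v = v → v = 0) :
    IsUnit (1 - T) := by
  have hres := (hT.hasEigenvalue_or_mem_resolventSet one_ne_zero).resolve_left fun heig => by
    obtain ⟨v, hv⟩ := heig.exists_hasEigenvector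
    exact hv.2 (hinj v (by simpa using hv.apply_eq_smul))
  rwa [spectrum.mem_resolventSet_iff, map_one] at hres

theorem tendsto_of_tendsto_isUnit_apply {ι X : Type*} {l : Filter ι} [NormedAddCommGroup X]
    [NormedSpace ℝ X] [CompleteSpace X] {S : X →L[ℝ] X} (hS : IsUnit S) {Sn : ι → X →L[ℝ] X}
    (hSn : Tendsto Sn l (𝓝 S)) {vn : ι → X} {v : X}
    (hv : Tendsto (fun n => Sn n (vn n)) l (𝓝 (S v))) : Tendsto vn l (𝓝 v) := by
  obtain ⟨S, rfl⟩ := hS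
  have hinv : Tendsto (fun n => Ring.inverse (Sn n)) l (𝓝 (Ring.inverse (S : X →L[ℝ] X))) :=
    (NormedRing.inverse_continuousAt S).tendsto.comp hSn
  have happly := (isBoundedBilinearMap_apply.continuous.tendsto _).comp (hinv.prodMk_nhds hv)
  have hcancel : ∀ (R : X →L[ℝ] X) (w : X), IsUnit R → Ring.inverse R (R w) = w :=
    fun R w hR => congrArg (fun f : X →L[ℝ] X => f w) (Ring.inverse_mul_cancel R hR)
  rw [hcancel _ _ S.isUnit] at happly
  refine happly.congr' ?_
  filter_upwards [hSn.eventually (S.nhds)] with n hn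
  exact hcancel _ _ hn

end Stability

section Transport

variable {d : ℕ}

namespace IntervalSystem

variable (c : IntervalSystem d)

/-- `u` solves `u = ℋ u + b` on the intervals of the system. -/
def IsSolution (b u : Fin d → ℝ → ℝ) : Prop :=
  ∀ i, ∀ x ∈ c.interval i, u i x = calH d c.left c.right u i x + b i x

/-- The vector-function on `[-1, 1]` obtained from a vector-function on the intervals of a system
by their affine parametrizations. -/
def pullback (u : Fin d → ℝ → ℝ) (hu : memVecC d c.left c.right u) :
    C(Icc (-1 : ℝ) 1, Fin d → ℝ) where
  toFun s i := u i (c.param i s)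
  continuous_toFun := continuous_pi fun i => (hu i).comp_continuous
    (continuous_affIcc.comp continuous_subtype_val) fun s => (c.bijOn_param i).mapsTo s.2

variable {c} {u : Fin d → ℝ → ℝ} {hu : memVecC d c.left c.right u}

theorem pullback_apply (s : Icc (-1 : ℝ) 1) (i : Fin d) :
    c.pullback u hu s i = u i (c.param i s) :=
  rfl

theorem harmExt_eq_harmEval_pullback {i : Fin d} {z : ℂ}
    (hz : z ∉ Complex.ofReal '' c.interval i) :
    harmExt (c.left i) (c.right i) (u i) z =
      harmEval (c.coord i z) (component i (c.pullback u hu)) :=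
  harmExt_eq_harmEval (c.left_lt_right i) (fun _ => rfl) hz

theorem integral_arcsineMeasure_eq_integral_pullback (i : Fin d) :
    ∫ x, u i x ∂arcsineMeasure (c.left i) (c.right i) =
      ∫ s, component i (c.pullback u hu) s ∂arcsineLaw :=
  integral_arcsineMeasure_eq_integral_arcsineLaw (c.left_lt_right i) _

theorem calHOperator_pullback (s : Icc (-1 : ℝ) 1) (i : Fin d) :
    calHOperator c (c.pullback u hu) s i = calH d c.left c.right u i (c.param i s) := by
  rw [calHOperator_apply, calH]
  congr 1
  refine Finset.sum_congr rfl fun j hj => (harmExt_eq_harmEval_pullback ?_).symm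
  rw [Complex.ofReal_injective.mem_set_image]
  exact c.param_notMem_interval (Finset.ne_of_mem_erase hj).symm s

theorem one_sub_calHOperator_pullback {b : Fin d → ℝ → ℝ} (hfix : c.IsSolution b u)
    (s : Icc (-1 : ℝ) 1) (i : Fin d) :
    (1 - calHOperator c) (c.pullback u hu) s i = b i (c.param i s) := by
  change c.pullback u hu s i - calHOperator c (c.pullback u hu) s i = _
  rw [calHOperator_pullback, pullback_apply, hfix i _ ((c.bijOn_param i).mapsTo s.2)]
  exact add_sub_cancel_left _ _

theorem tendstoUniformly_param {ι : Type*} {l : Filter ι} {cn : ι → IntervalSystem d}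
    (hc : Tendsto cn l (𝓝 c)) (i : Fin d) :
    TendstoUniformly (fun n (s : Icc (-1 : ℝ) 1) => (cn n).param i s) (fun s => c.param i s) l := by
  let paramMap : C(IntervalSystem d × Icc (-1 : ℝ) 1, ℝ) := ⟨_, continuous_param i⟩
  exact ContinuousMap.tendsto_iff_tendstoUniformly.1
    ((paramMap.curry.continuous.tendsto c).comp hc)

theorem tendsto_pullback {ι : Type*} {l : Filter ι} {cn : ι → IntervalSystem d}
    (hc : Tendsto cn l (𝓝 c)) {J : Fin d → Set ℝ} (hJ : ∀ i, IsCompact (J i))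
    (hcnJ : ∀ n i, (cn n).interval i ⊆ J i) (hcJ : ∀ i, c.interval i ⊆ J i)
    {bn : ι → Fin d → ℝ → ℝ} {b : Fin d → ℝ → ℝ} (hb : ∀ i, ContinuousOn (b i) (J i))
    (hbn : ∀ i, TendstoUniformlyOn (fun n => bn n i) (b i) l (J i))
    {un : ι → Fin d → ℝ → ℝ}
    (hun : ∀ n, memVecC d (cn n).left (cn n).right (un n))
    (hunfix : ∀ n, (cn n).IsSolution (bn n) (un n)) (hufix : c.IsSolution b u) :
    Tendsto (fun n => (cn n).pullback (un n) (hun n)) l (𝓝 (c.pullback u hu)) := by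
  refine tendsto_of_tendsto_isUnit_apply
    (isUnit_one_sub_of_isCompactOperator (isCompactOperator_calHOperator c)
      fun v => eq_zero_of_calHOperator_eq_self c)
    (((continuous_calHOperator.tendsto c).comp hc).const_sub 1) ?_
  refine tendsto_continuousMap_pi_iff.2 fun i => ?_
  simp only [Function.comp_apply, one_sub_calHOperator_pullback (hunfix _),
    one_sub_calHOperator_pullback hufix]
  exact tendstoUniformly_comp_of_tendstoUniformlyOn (hbn i)
    ((hJ i).uniformContinuousOn_of_continuous (hb i)) (tendstoUniformly_param hc i)
    (fun n s => hcnJ n i (((cn n).bijOn_param i).mapsTo s.2))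
    fun s => hcJ i ((c.bijOn_param i).mapsTo s.2)

section Tendsto

variable {ι : Type*} {l : Filter ι} {cn : ι → IntervalSystem d} {un : ι → Fin d → ℝ → ℝ}
  {hun : ∀ n, memVecC d (cn n).left (cn n).right (un n)}

theorem eventually_abs_harmExt_sub_lt (hc : Tendsto cn l (𝓝 c))
    (hpull : Tendsto (fun n => (cn n).pullback (un n) (hun n)) l (𝓝 (c.pullback u hu)))
    (i : Fin d) {ε : ℝ} (hε : 0 < ε) :
    ∀ᶠ n in l, ∀ z ∉ Complex.ofReal '' (c.interval i ∪ (cn n).interval i),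
      |harmExt ((cn n).left i) ((cn n).right i) (un n i) z -
        harmExt (c.left i) (c.right i) (u i) z| < ε := by
  have hunif := tendstoUniformly_harmEval_slitCoord_of_tendsto (c.left_lt_right i).ne
    (((continuous_left i).tendsto c).comp hc) (((continuous_right i).tendsto c).comp hc)
    (((component i).continuous.tendsto _).comp hpull)
  filter_upwards [Metric.tendstoUniformly_iff.1 hunif ε hε] with n hn z hz
  rw [image_union, mem_union, not_or] at hz
  rw [harmExt_eq_harmEval_pullback (hu := hun n) hz.2,
    harmExt_eq_harmEval_pullback (hu := hu) hz.1, ← Real.dist_eq, dist_comm]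
  exact hn z

theorem tendsto_integral_arcsineMeasure
    (hpull : Tendsto (fun n => (cn n).pullback (un n) (hun n)) l (𝓝 (c.pullback u hu)))
    (i : Fin d) :
    Tendsto (fun n => ∫ x, un n i x ∂arcsineMeasure ((cn n).left i) ((cn n).right i)) l
      (𝓝 (∫ x, u i x ∂arcsineMeasure (c.left i) (c.right i))) := by
  simp only [integral_arcsineMeasure_eq_integral_pullback (hu := hun _),
    integral_arcsineMeasure_eq_integral_pullback (hu := hu)]
  exact ((integralContinuousMapCLM arcsineLaw ℝ ∘L component i).continuous.tendsto _).comp hpull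

end Tendsto

end IntervalSystem

end Transport

theorem solutions_harmonic_extensions_uniform_convergence_general
    {ι : Type*} {l : Filter ι} {d : ℕ} {A B : Fin d → ℝ} (hAB : ∀ i, A i < B i)
    (hdisj : ∀ i j, i ≠ j → Disjoint (Icc (A i) (B i)) (Icc (A j) (B j)))
    {An Bn : ι → Fin d → ℝ} (hABn : ∀ n i, An n i < Bn n i)
    (hdisjn : ∀ n, ∀ i j, i ≠ j →
      Disjoint (Icc (An n i) (Bn n i)) (Icc (An n j) (Bn n j)))
    (hconvA : ∀ i, Tendsto (fun n => An n i) l (𝓝 (A i)))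
    (hconvB : ∀ i, Tendsto (fun n => Bn n i) l (𝓝 (B i)))
    {J : Fin d → Set ℝ} (hJ : ∀ i, IsCompact (J i))
    (hJn : ∀ n i, Icc (An n i) (Bn n i) ⊆ J i) (hABJ : ∀ i, Icc (A i) (B i) ⊆ J i)
    {bn : ι → Fin d → ℝ → ℝ} {b : Fin d → ℝ → ℝ} (hbcont : ∀ i, ContinuousOn (b i) (J i))
    (hbconv : ∀ i, TendstoUniformlyOn (fun n => bn n i) (b i) l (J i))
    {yn : ι → Fin d → ℝ → ℝ} {y : Fin d → ℝ → ℝ}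
    (hyncont : ∀ n, memVecC d (An n) (Bn n) (yn n)) (hycont : memVecC d A B y)
    (hynfix : ∀ n i, ∀ x ∈ Icc (An n i) (Bn n i),
      yn n i x = calH d (An n) (Bn n) (yn n) i x + bn n i x)
    (hyfix : ∀ i, ∀ x ∈ Icc (A i) (B i), y i x = calH d A B y i x + b i x)
    (i : Fin d) {ε : ℝ} (hε : 0 < ε) :
    ∀ᶠ n in l,
      (∀ z : ℂ, z ∉ Complex.ofReal '' (Icc (A i) (B i) ∪ Icc (An n i) (Bn n i)) →
        |harmExt (An n i) (Bn n i) (yn n i) z - harmExt (A i) (B i) (y i) z| ≤ ε) ∧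
      |(∫ x, yn n i x ∂arcsineMeasure (An n i) (Bn n i)) -
        ∫ x, y i x ∂arcsineMeasure (A i) (B i)| ≤ ε := by
  let c : IntervalSystem d := ⟨fun i => (A i, B i), hAB, fun i j => hdisj i j⟩
  let cn (n : ι) : IntervalSystem d :=
    ⟨fun i => (An n i, Bn n i), hABn n, fun i j => hdisjn n i j⟩
  have hc : Tendsto cn l (𝓝 c) := tendsto_subtype_rng.2 <| tendsto_pi_nhds.2 fun i =>
    (hconvA i).prodMk_nhds (hconvB i)
  have hpull : Tendsto (fun n => (cn n).pullback (yn n) (hyncont n)) l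
      (𝓝 (c.pullback y hycont)) :=
    IntervalSystem.tendsto_pullback hc hJ hJn hABJ hbcont hbconv hyncont hynfix hyfix
  filter_upwards [IntervalSystem.eventually_abs_harmExt_sub_lt hc hpull i hε,
    (IntervalSystem.tendsto_integral_arcsineMeasure hpull i).eventually
      (Metric.ball_mem_nhds _ hε)] with n hharm hint
  exact ⟨fun z hz => (hharm z hz).le, (Metric.mem_ball.1 hint).le⟩

/-- Lemma 3.10: if `y⃗_n` and `y⃗` are the solutions of
`y⃗_n = ℋ_{Δ⃗_n} y⃗_n + b⃗_n` and `y⃗ = ℋ_{Δ⃗} y⃗ + b⃗` with `b_{n,i} → b_i` uniformly,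
then the harmonic extensions `H_{Δ_{n,i}}(y⃗_n)_i` converge to `H_{Δ_i}(y⃗)_i` uniformly
in the extended complex plane. -/
theorem solutions_harmonic_extensions_uniform_convergence
    (d : ℕ) (A B : Fin d → ℝ) (hAB : ∀ i, A i < B i)
    (hdisj : ∀ i j, i ≠ j → Disjoint (Set.Icc (A i) (B i)) (Set.Icc (A j) (B j)))
    (An Bn : ℕ → Fin d → ℝ)
    (hABn : ∀ n i, An n i < Bn n i)
    (hdisjn : ∀ n, ∀ i j, i ≠ j →
      Disjoint (Set.Icc (An n i) (Bn n i)) (Set.Icc (An n j) (Bn n j)))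
    (hconvA : ∀ i, Tendsto (fun n => An n i) atTop (𝓝 (A i)))
    (hconvB : ∀ i, Tendsto (fun n => Bn n i) atTop (𝓝 (B i)))
    -- an interval `[P i, Q i]` containing `⋃_m Δ_{m,i}` and `Δ_i`
    (P Q : Fin d → ℝ)
    (hPQn : ∀ m i, Set.Icc (An m i) (Bn m i) ⊆ Set.Icc (P i) (Q i))
    (hPQ : ∀ i, Set.Icc (A i) (B i) ⊆ Set.Icc (P i) (Q i))
    -- the data `b_{n,i}` converging uniformly to `b_i`
    (bn : ℕ → Fin d → ℝ → ℝ) (b : Fin d → ℝ → ℝ)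
    (hbncont : ∀ n i, ContinuousOn (bn n i) (Set.Icc (P i) (Q i)))
    (hbcont : ∀ i, ContinuousOn (b i) (Set.Icc (P i) (Q i)))
    (hbconv : ∀ i, TendstoUniformlyOn (fun n => bn n i) (b i) atTop (Set.Icc (P i) (Q i)))
    -- the solutions `y⃗_n` and `y⃗`
    (yn : ℕ → Fin d → ℝ → ℝ) (y : Fin d → ℝ → ℝ)
    (hyncont : ∀ n, memVecC d (An n) (Bn n) (yn n))
    (hycont : memVecC d A B y)
    (hynfix : ∀ n i, ∀ x ∈ Set.Icc (An n i) (Bn n i),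
      yn n i x = calH d (An n) (Bn n) (yn n) i x + bn n i x)
    (hyfix : ∀ i, ∀ x ∈ Set.Icc (A i) (B i),
      y i x = calH d A B y i x + b i x) :
    -- conclusion: uniform convergence of the harmonic extensions on the extended plane
    -- (off the two slits, together with convergence of the values at infinity)
    ∀ i, ∀ ε > (0 : ℝ), ∀ᶠ n in atTop,
      (∀ z : ℂ,
        z ∉ Complex.ofReal '' (Set.Icc (A i) (B i) ∪ Set.Icc (An n i) (Bn n i)) →
        |harmExt (An n i) (Bn n i) (yn n i) z - harmExt (A i) (B i) (y i) z| ≤ ε) ∧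
      |(∫ x, yn n i x ∂(arcsineMeasure (An n i) (Bn n i))) -
        ∫ x, y i x ∂(arcsineMeasure (A i) (B i))| ≤ ε := by
  intro i ε hε
  exact solutions_harmonic_extensions_uniform_convergence_general hAB hdisj hABn hdisjn hconvA
    hconvB (fun _ => isCompact_Icc) hPQn hPQ hbcont hbconv hyncont hycont hynfix hyfix i hε

end
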